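/- arXiv:1508.03154 — 3 statements merged into one kernel-verified Lean document; each statement's English description precedes it below -/
import Mathlib

section
/- Suppose f is irreducible in ℤ[u^{±1}] and noncyclotomic. Then for every positive integer k the set P_k(α_f) = {x ∈ X_f : α_f^k x = x} of points of period k is finite, and the topological entropy of α_f satisfies h(α_f) = lim_{k→∞} (1/k)·log |P_k(α_f)|. -/
open Filter Topology Polynomial

noncomputable section

/-- The circle `ℝ/ℤ`. -/
abbrev Torus := AddCircle (1 : ℝ)

/-- The shift `σ` on `𝕋^ℤ`: `(σ x)_n = x_{n+1}`. -/
def shiftT (x : ℤ → Torus) : ℤ → Torus := fun n => x (n + 1)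

/-- `f(σ)` acting on `𝕋^ℤ`. -/
def fsT (f : Polynomial ℤ) (x : ℤ → Torus) : ℤ → Torus :=
  fun n => ∑ k ∈ Finset.range (f.natDegree + 1), f.coeff k • x (n + (k : ℤ))

/-- `X_f = ker f(σ) ⊆ 𝕋^ℤ`. -/
def Xf (f : Polynomial ℤ) : Set (ℤ → Torus) := {x | ∀ n, fsT f x n = 0}

/-- `f` is noncyclotomic: no complex root of `f` is a root of unity. -/
def Noncyclotomic (f : Polynomial ℤ) : Prop :=
  ∀ θ : ℂ, Polynomial.aeval θ f = 0 → ∀ n : ℕ, 0 < n → θ ^ n ≠ 1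

/-- The set of points of `X_f` of period `k` under `α_f = σ|_{X_f}`. -/
def Pk (f : Polynomial ℤ) (k : ℕ) : Set (ℤ → Torus) :=
  {x | x ∈ Xf f ∧ ∀ n : ℤ, x (n + (k : ℤ)) = x n}

/-- The length of an integer polynomial: the sum of the absolute values of its coefficients
bounds values at points of a disc. -/
theorem norm_aeval_le_of_sum_abs_coeff_le {z : ℂ} {H : ℝ} (hH : 1 ≤ H) (hz : ‖z‖ ≤ H)
    {Q : ℤ[X]} {D : ℕ} (hD : Q.natDegree ≤ D) {B : ℝ}
    (hB : ∑ i ∈ Finset.range (D + 1), |(Q.coeff i : ℝ)| ≤ B) :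
    ‖aeval z Q‖ ≤ B * H ^ D := by
  rw [aeval_eq_sum_range' (Nat.lt_succ_of_le hD)]
  calc ‖∑ i ∈ Finset.range (D + 1), Q.coeff i • z ^ i‖
      ≤ ∑ i ∈ Finset.range (D + 1), |(Q.coeff i : ℝ)| * H ^ D := by
        refine norm_sum_le_of_le _ fun i hi => ?_
        rw [zsmul_eq_mul, norm_mul, norm_pow, Complex.norm_intCast]
        gcongr
        exact (pow_le_pow_left₀ (norm_nonneg _) hz i).trans
          (pow_le_pow_right₀ hH (Nat.lt_succ_iff.mp (Finset.mem_range.mp hi)))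
    _ ≤ B * H ^ D := by
        rw [← Finset.sum_mul]
        gcongr

theorem isIntegral_pow_mul_aeval {K : Type*} [Field K] {a : ℤ} {t : K}
    (h : IsIntegral ℤ (a • t)) {Q : ℤ[X]} {D : ℕ} (hD : Q.natDegree ≤ D) :
    IsIntegral ℤ ((a : K) ^ D * aeval t Q) := by
  rw [aeval_eq_sum_range' (Nat.lt_succ_of_le hD), Finset.mul_sum]
  refine IsIntegral.sum _ fun i hi => ?_
  have hi' : i ≤ D := Nat.lt_succ_iff.mp (Finset.mem_range.mp hi)
  have heq : (a : K) ^ D * Q.coeff i • t ^ i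
      = algebraMap ℤ K (a ^ (D - i) * Q.coeff i) * (a • t) ^ i := by
    rw [← Nat.sub_add_cancel hi', pow_add]
    simp only [zsmul_eq_mul, eq_intCast, Int.cast_mul, Int.cast_pow, Nat.add_sub_cancel, mul_pow]
    ring
  rw [heq]
  exact isIntegral_algebraMap.mul (h.pow i)

theorem one_le_prod_norm_embeddings {K : Type*} [Field K] [NumberField K] {x : K} (hx : x ≠ 0)
    (hxint : IsIntegral ℤ x) : 1 ≤ ∏ σ : K →ₐ[ℚ] ℂ, ‖σ x‖ := by
  rw [← norm_prod, ← Algebra.norm_eq_prod_embeddings]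
  obtain ⟨y, hy⟩ := IsIntegrallyClosed.isIntegral_iff.mp (Algebra.isIntegral_norm ℚ hxint)
  have hy0 : y ≠ 0 := by
    rintro rfl
    rw [map_zero] at hy
    exact hx (Algebra.norm_eq_zero_iff.mp hy.symm)
  rw [← hy]
  simpa using (by exact_mod_cast Int.one_le_abs hy0 : (1 : ℝ) ≤ |(y : ℝ)|)

/-- Liouville's inequality for values of integer polynomials at an element of a number field. -/
theorem NumberField.exists_liouville_bound {K : Type*} [Field K] [NumberField K] (t : K)
    (σ₀ : K →ₐ[ℚ] ℂ) :
    ∃ C : ℝ, 1 ≤ C ∧ ∃ d : ℕ, ∀ (Q : ℤ[X]) (D : ℕ) (B : ℝ), Q.natDegree ≤ D → 1 ≤ B →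
      ∑ i ∈ Finset.range (D + 1), |(Q.coeff i : ℝ)| ≤ B → aeval (σ₀ t) Q ≠ 0 →
      1 ≤ C ^ D * B ^ d * ‖aeval (σ₀ t) Q‖ := by
  classical
  obtain ⟨a, ha, hint⟩ := ((IsFractionRing.isAlgebraic_iff ℤ ℚ K).mpr
    (Algebra.IsAlgebraic.isAlgebraic t)).exists_integral_multiple
  obtain ⟨H, hH1, hH⟩ : ∃ H : ℝ, 1 ≤ H ∧ ∀ σ : K →ₐ[ℚ] ℂ, ‖σ t‖ ≤ H := by
    refine ⟨1 + ∑ σ : K →ₐ[ℚ] ℂ, ‖σ t‖, ?_, fun σ => ?_⟩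
    · exact le_add_of_nonneg_right (Finset.sum_nonneg fun _ _ => norm_nonneg _)
    · have := Finset.single_le_sum (f := fun σ : K →ₐ[ℚ] ℂ => ‖σ t‖)
        (fun _ _ => norm_nonneg _) (Finset.mem_univ σ)
      linarith
  set d := Fintype.card (K →ₐ[ℚ] ℂ)
  have ha1 : (1 : ℝ) ≤ |(a : ℝ)| := by
    exact_mod_cast Int.one_le_abs ha
  refine ⟨(|(a : ℝ)| * H) ^ d, one_le_pow₀ (one_le_mul_of_one_le_of_one_le ha1 hH1), d, ?_⟩
  intro Q D B hD hB1 hB hne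
  have hval (σ : K →ₐ[ℚ] ℂ) : σ ((a : K) ^ D * aeval t Q) = (a : ℂ) ^ D * aeval (σ t) Q := by
    simp only [map_mul, map_pow, map_intCast]
    congr 1
    exact (Polynomial.aeval_algHom_apply (σ.restrictScalars ℤ) t Q).symm
  have hx0 : (a : K) ^ D * aeval t Q ≠ 0 := by
    intro h
    have := hval σ₀
    rw [h, map_zero] at this
    exact mul_ne_zero (pow_ne_zero _ (Int.cast_ne_zero.mpr ha)) hne this.symm
  have hnorm := one_le_prod_norm_embeddings hx0 (isIntegral_pow_mul_aeval hint hD)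
  rw [← Finset.mul_prod_erase _ _ (Finset.mem_univ σ₀)] at hnorm
  refine hnorm.trans ?_
  have hE : 1 ≤ |(a : ℝ)| ^ D * (B * H ^ D) :=
    one_le_mul_of_one_le_of_one_le (one_le_pow₀ ha1)
      (one_le_mul_of_one_le_of_one_le hB1 (one_le_pow₀ hH1))
  have hoth : ∏ σ ∈ Finset.univ.erase σ₀, ‖σ ((a : K) ^ D * aeval t Q)‖
      ≤ (|(a : ℝ)| ^ D * (B * H ^ D)) ^ (d - 1) := by
    have : (Finset.univ.erase σ₀ : Finset (K →ₐ[ℚ] ℂ)).card = d - 1 := by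
      rw [Finset.card_erase_of_mem (Finset.mem_univ _), Finset.card_univ]
    rw [← this, ← Finset.prod_const]
    refine Finset.prod_le_prod (fun _ _ => norm_nonneg _) fun σ _ => ?_
    rw [hval, norm_mul, norm_pow, Complex.norm_intCast]
    gcongr
    exact norm_aeval_le_of_sum_abs_coeff_le hH1 (hH σ) hD hB
  have hd : 1 ≤ d := Fintype.card_pos_iff.mpr ⟨σ₀⟩
  calc _ ≤ ‖σ₀ ((a : K) ^ D * aeval t Q)‖ * (|(a : ℝ)| ^ D * (B * H ^ D)) ^ (d - 1) := by gcongr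
    _ = |(a : ℝ)| ^ D * (|(a : ℝ)| ^ D * (B * H ^ D)) ^ (d - 1) * ‖aeval (σ₀ t) Q‖ := by
      rw [hval, norm_mul, norm_pow, Complex.norm_intCast]; ring
    _ ≤ (|(a : ℝ)| ^ D * (B * H ^ D)) * (|(a : ℝ)| ^ D * (B * H ^ D)) ^ (d - 1)
        * ‖aeval (σ₀ t) Q‖ := by
      gcongr
      exact le_mul_of_one_le_right (by positivity)
        (one_le_mul_of_one_le_of_one_le hB1 (one_le_pow₀ hH1))
    _ = (|(a : ℝ)| ^ D * (B * H ^ D)) ^ d * ‖aeval (σ₀ t) Q‖ := by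
      rw [← pow_succ', Nat.sub_add_cancel hd]
    _ = ((|(a : ℝ)| * H) ^ d) ^ D * B ^ d * ‖aeval (σ₀ t) Q‖ := by
      rw [← pow_mul, mul_comm d D, pow_mul]; ring

/-- Liouville's inequality for values of integer polynomials at an algebraic number. -/
theorem exists_liouville_bound {θ : ℂ} (hθ : IsAlgebraic ℤ θ) :
    ∃ C : ℝ, 1 ≤ C ∧ ∃ d : ℕ, ∀ (Q : ℤ[X]) (D : ℕ) (B : ℝ), Q.natDegree ≤ D → 1 ≤ B →
      ∑ i ∈ Finset.range (D + 1), |(Q.coeff i : ℝ)| ≤ B → aeval θ Q ≠ 0 →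
      1 ≤ C ^ D * B ^ d * ‖aeval θ Q‖ := by
  have hθQ : IsAlgebraic ℚ θ := hθ.extendScalars (algebraMap ℤ ℚ).injective_int
  have : FiniteDimensional ℚ (IntermediateField.adjoin ℚ {θ}) :=
    IntermediateField.adjoin.finiteDimensional hθQ.isIntegral
  have : NumberField (IntermediateField.adjoin ℚ {θ}) := { to_finiteDimensional := by convert this }
  exact NumberField.exists_liouville_bound (IntermediateField.AdjoinSimple.gen ℚ θ)
    (algebraMap (IntermediateField.adjoin ℚ {θ}) ℂ).toRatAlgHom

/-- Dividing `[-V, V]` into `H` equal boxes. -/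
theorem abs_sub_le_of_floor_eq {u v V : ℝ} {H : ℕ} (hV : 0 < V) (hH : 0 < H)
    (hu : -V ≤ u) (hv : -V ≤ v)
    (h : ⌊(u + V) * H / (2 * V)⌋₊ = ⌊(v + V) * H / (2 * V)⌋₊) : |u - v| ≤ 2 * V / H := by
  have hH' : (0 : ℝ) < H := Nat.cast_pos.mpr hH
  have hu0 : 0 ≤ (u + V) * H / (2 * V) := by
    have : 0 ≤ u + V := by linarith
    positivity
  have hv0 : 0 ≤ (v + V) * H / (2 * V) := by
    have : 0 ≤ v + V := by linarith
    positivity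
  have h1 := Nat.floor_le hu0
  have h2 := Nat.lt_floor_add_one ((u + V) * H / (2 * V))
  have h3 := Nat.floor_le hv0
  have h4 := Nat.lt_floor_add_one ((v + V) * H / (2 * V))
  rw [h] at h1 h2
  have hd : (u - v) * (H / (2 * V)) = (u + V) * H / (2 * V) - (v + V) * H / (2 * V) := by
    field_simp; ring
  have habs : |(u - v) * (H / (2 * V))| ≤ 1 := by
    rw [hd, abs_le]; constructor <;> linarith
  rw [abs_mul, abs_of_pos (by positivity : (0 : ℝ) < H / (2 * V))] at habs
  rw [le_div_iff₀ hH']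
  rw [mul_div_assoc', div_le_one (by positivity)] at habs
  exact habs

/-- Dirichlet's box principle: a system of complex linear forms in many variables takes small
values at a nonzero integer point of bounded size. -/
theorem exists_int_vec_small_linear_forms {ι J : Type*} [Fintype ι] [Fintype J] (a : J → ι → ℂ)
    {W : ℝ} (hW : 0 < W) (ha : ∀ j, ∑ i, ‖a j i‖ ≤ W) {X H : ℕ} (hX : 0 < X) (hH : 0 < H)
    (hcard : (H + 1) ^ (2 * Fintype.card J) < (X + 1) ^ Fintype.card ι) :
    ∃ c : ι → ℤ, c ≠ 0 ∧ (∀ i, |c i| ≤ X) ∧ ∀ j, ‖∑ i, (c i : ℂ) * a j i‖ ≤ 4 * (W * X) / H := by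
  classical
  have hX' : (0 : ℝ) < X := Nat.cast_pos.mpr hX
  have hV : 0 < W * X := by positivity
  let form : (ι → Fin (X + 1)) → J → ℂ := fun c j => ∑ i, ((c i : ℕ) : ℂ) * a j i
  have hform (c j) : ‖form c j‖ ≤ W * X := by
    calc ‖form c j‖ ≤ ∑ i, ‖a j i‖ * X := by
          refine norm_sum_le_of_le _ fun i _ => ?_
          rw [norm_mul, Complex.norm_natCast, mul_comm]
          gcongr
          exact Nat.lt_succ_iff.mp (c i).2
      _ ≤ W * X := by rw [← Finset.sum_mul]; gcongr; exact ha j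
  have hbox {u : ℝ} (hu : |u| ≤ W * X) : ⌊(u + W * X) * H / (2 * (W * X))⌋₊ < H + 1 := by
    rw [Nat.lt_succ_iff]
    refine Nat.floor_le_of_le ?_
    rw [div_le_iff₀ (by positivity)]
    have := (abs_le.mp hu).2
    nlinarith [(Nat.cast_nonneg H : (0 : ℝ) ≤ H)]
  have hre (c j) : |(form c j).re| ≤ W * X := (Complex.abs_re_le_norm _).trans (hform c j)
  have him (c j) : |(form c j).im| ≤ W * X := (Complex.abs_im_le_norm _).trans (hform c j)
  let g : (ι → Fin (X + 1)) → J → Fin (H + 1) × Fin (H + 1) := fun c j =>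
    (⟨_, hbox (hre c j)⟩, ⟨_, hbox (him c j)⟩)
  obtain ⟨c, c', hne, hg⟩ := Fintype.exists_ne_map_eq_of_card_lt g (by
    simpa [← pow_two, ← pow_mul] using hcard)
  refine ⟨fun i => (c i : ℤ) - (c' i : ℤ), ?_, fun i => ?_, fun j => ?_⟩
  · intro h
    refine hne (funext fun i => Fin.ext ?_)
    have := congrFun h i
    simp only [Pi.zero_apply] at this
    omega
  · have h1 := (c i).2
    have h2 := (c' i).2
    change |(c i : ℤ) - (c' i : ℤ)| ≤ X
    rw [abs_le]; constructor <;> omega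
  · have hsub : ∑ i, (((c i : ℤ) - (c' i : ℤ) : ℤ) : ℂ) * a j i = form c j - form c' j := by
      simp only [form, ← Finset.sum_sub_distrib]
      refine Finset.sum_congr rfl fun i _ => ?_
      push_cast; ring
    have hj := congrFun hg j
    simp only [g, Prod.mk.injEq, Fin.mk.injEq] at hj
    rw [hsub]
    refine (Complex.norm_le_abs_re_add_abs_im _).trans ?_
    rw [Complex.sub_re, Complex.sub_im]
    have h1 := abs_sub_le_of_floor_eq hV hH (abs_le.mp (hre c j)).1 (abs_le.mp (hre c' j)).1 hj.1
    have h2 := abs_sub_le_of_floor_eq hV hH (abs_le.mp (him c j)).1 (abs_le.mp (him c' j)).1 hj.2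
    calc _ ≤ 2 * (W * X) / H + 2 * (W * X) / H := add_le_add h1 h2
      _ = 4 * (W * X) / H := by ring

/-- A zero estimate for polynomials in `w` and `y` at the points `(b r + k s, θ ^ r)`. -/
theorem zero_estimate {θ : ℂ} (hθ0 : θ ≠ 0) (hθ : ∀ n : ℕ, 0 < n → θ ^ n ≠ 1) {L M : ℕ}
    (p : Fin M → ℂ[X]) (hp : ∀ m, (p m).natDegree < L) (β : ℂ) (pts : Finset ℂ) (R : ℂ → ℕ)
    (hzero : ∀ w ∈ pts, ∀ j < M,
      ∑ m : Fin M, (p m).eval (w + β * j) * θ ^ ((m : ℕ) * (R w + j)) = 0)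
    (hcard : (L - 1) * M < pts.card) : p = 0 := by
  classical
  by_contra hne
  let I := {m : Fin M // p m ≠ 0}
  obtain ⟨m₀, hm₀⟩ := Function.ne_iff.mp hne
  have : Nonempty I := ⟨⟨m₀, hm₀⟩⟩
  have hq : Fintype.card I ≤ M := by
    simpa only [Fintype.card_fin] using Fintype.card_subtype_le (fun m => p m ≠ 0)
  let e : I ≃ Fin (Fintype.card I) := Fintype.equivFin I
  let q : I → I → ℂ[X] := fun i j =>
    C (θ ^ ((i.1 : ℕ) * (e j : ℕ))) * taylor (β * (e j : ℕ)) (p i)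
  let A : Matrix I I ℂ[X] := Matrix.of q
  have hq0 (i j) : q i j ≠ 0 := by
    refine mul_ne_zero (C_ne_zero.mpr (pow_ne_zero _ hθ0)) ?_
    rw [ne_eq, taylor_eq_zero]
    exact i.2
  have hqdeg (i j) : (q i j).natDegree = (p i).natDegree := by
    simp only [q]
    rw [natDegree_C_mul (pow_ne_zero _ hθ0), natDegree_taylor]
  have hqlead (i j) : (q i j).leadingCoeff =
      θ ^ ((i.1 : ℕ) * (e j : ℕ)) * (p i).leadingCoeff := by
    simp only [q]
    rw [leadingCoeff_mul, leadingCoeff_C, leadingCoeff_taylor]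
  have hproddeg (σ : Equiv.Perm I) :
      (∏ j, q (σ j) j).natDegree = ∑ i : I, (p i).natDegree := by
    rw [natDegree_prod _ _ fun j _ => hq0 _ j]
    simp only [hqdeg]
    exact Equiv.sum_comp σ fun i : I => (p i).natDegree
  have hdetne : A.det ≠ 0 := by
    intro h
    have hc := congrArg (fun P => coeff P (∑ i : I, (p i).natDegree)) h
    simp only [coeff_zero, Matrix.det_apply, finsetSum_coeff] at hc
    have hterm (σ : Equiv.Perm I) :
        (Equiv.Perm.sign σ • ∏ j, A (σ j) j).coeff (∑ i : I, (p i).natDegree) =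
        (∏ i : I, (p i).leadingCoeff) *
          (Equiv.Perm.sign σ • ∏ j : I, θ ^ (((σ j).1 : ℕ) * (e j : ℕ))) := by
      have h1 : (∏ j, q (σ j) j).coeff (∑ i : I, (p i).natDegree) =
          (∏ i : I, (p i).leadingCoeff) * ∏ j : I, θ ^ (((σ j).1 : ℕ) * (e j : ℕ)) := by
        rw [← hproddeg σ, coeff_natDegree, leadingCoeff_prod]
        simp only [hqlead]
        rw [Finset.prod_mul_distrib, mul_comm]
        congr 1
        exact Equiv.prod_comp σ fun i : I => (p i).leadingCoeff
      rw [Units.smul_def, Units.smul_def, coeff_smul, mul_smul_comm]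
      congr 1
    simp only [hterm] at hc
    rw [← Finset.mul_sum] at hc
    change _ * ∑ σ : Equiv.Perm I, Equiv.Perm.sign σ •
      ∏ j, (Matrix.of fun i j : I => θ ^ ((i.1 : ℕ) * (e j : ℕ))) (σ j) j = 0 at hc
    rw [← Matrix.det_apply] at hc
    rcases mul_eq_zero.mp hc with hc | hc
    · obtain ⟨i, -, hi⟩ := Finset.prod_eq_zero_iff.mp hc
      exact i.2 (leadingCoeff_eq_zero.mp hi)
    · have hv : (Matrix.of fun i j : I => θ ^ ((i.1 : ℕ) * (e j : ℕ))) =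
          (Matrix.vandermonde fun a : Fin (Fintype.card I) => θ ^ ((e.symm a).1 : ℕ)).submatrix
            e e := by
        ext i j
        simp [Matrix.vandermonde_apply, pow_mul]
      rw [hv, Matrix.det_submatrix_equiv_self, Matrix.det_vandermonde_eq_zero_iff] at hc
      obtain ⟨i, j, hij, hne'⟩ := hc
      apply hne'
      have hinj : Function.Injective fun n : ℕ => θ ^ n := by
        intro m n hmn
        simp only at hmn
        by_contra hmn'
        rcases Nat.lt_or_gt_of_ne hmn' with hlt | hlt
        · refine hθ (n - m) (by omega) ?_
          rw [← Nat.sub_add_cancel hlt.le, pow_add] at hmn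
          exact mul_right_cancel₀ (pow_ne_zero m hθ0) (by rw [one_mul]; exact hmn.symm)
        · refine hθ (m - n) (by omega) ?_
          rw [← Nat.sub_add_cancel hlt.le, pow_add] at hmn
          exact mul_right_cancel₀ (pow_ne_zero n hθ0) (by rw [one_mul]; exact hmn)
      exact e.symm.injective (Subtype.ext (Fin.ext (hinj hij)))
  have hdetdeg : A.det.natDegree ≤ (L - 1) * M := by
    rw [Matrix.det_apply]
    refine natDegree_sum_le_of_forall_le _ _ fun σ _ => ?_
    refine (natDegree_smul_le _ _).trans ?_
    change (∏ j, q (σ j) j).natDegree ≤ _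
    rw [hproddeg]
    calc ∑ i : I, (p i).natDegree ≤ ∑ i : I, (L - 1) :=
          Finset.sum_le_sum fun i _ => Nat.le_sub_one_of_lt (hp i)
      _ = (L - 1) * Fintype.card I := by simp [mul_comm]
      _ ≤ (L - 1) * M := Nat.mul_le_mul_left _ hq
  have hroots : ∀ w ∈ pts, A.det.eval w = 0 := by
    intro w hw
    have hmap : A.det.eval w = (A.map (eval w)).det := by
      rw [← coe_evalRingHom, RingHom.map_det]; rfl
    rw [hmap]
    refine Matrix.exists_vecMul_eq_zero_iff.mp
      ⟨fun i => θ ^ ((i.1 : ℕ) * R w), ?_, ?_⟩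
    · intro h
      exact pow_ne_zero _ hθ0 (congrFun h ⟨m₀, hm₀⟩)
    · ext j
      have := hzero w hw (e j) ((e j).2.trans_le hq)
      rw [Pi.zero_apply, ← this, Matrix.vecMul, dotProduct]
      rw [← Finset.sum_subset (Finset.filter_subset (fun m => p m ≠ 0) Finset.univ)
        (fun m _ hm => by simp only [Finset.mem_filter, Finset.mem_univ, true_and, not_not] at hm
                          simp [hm]),
        ← Finset.sum_subtype_eq_sum_filter, Finset.subtype_univ]
      refine Finset.sum_congr rfl fun i _ => ?_
      simp only [A, q, Matrix.map_apply, Matrix.of_apply, eval_mul, eval_C, taylor_eval]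
      ring_nf
  have := Polynomial.card_le_degree_of_subset_roots (p := A.det) (Z := pts) (by
    intro w hw
    rw [mem_roots hdetne]
    exact hroots w (by simpa using hw))
  omega

/-- A tail of the exponential series is exponentially small. -/
theorem Complex.norm_exp_sub_sum_le_exp_neg_mul (w : ℂ) (T : ℕ) :
    ‖Complex.exp w - ∑ m ∈ Finset.range T, w ^ m / m.factorial‖ ≤
      Real.exp (-T) * Real.exp (3 * ‖w‖) := by
  refine (Complex.norm_exp_sub_sum_le_exp_norm_sub_sum w T).trans ?_
  set x := ‖w‖
  have hx : 0 ≤ x := norm_nonneg w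
  have hs (y : ℝ) : Summable fun n : ℕ => y ^ n / n.factorial := Real.summable_pow_div_factorial y
  have hexp (y : ℝ) : Real.exp y = ∑' n : ℕ, y ^ n / n.factorial := by
    rw [Real.exp_eq_exp_ℝ, NormedSpace.exp_eq_tsum_div]
  rw [hexp x, ← (hs x).sum_add_tsum_nat_add T, add_sub_cancel_left]
  have h3 : Real.exp (-T) * Real.exp (3 * x) =
      ∑' n : ℕ, Real.exp (-T) * ((3 * x) ^ n / n.factorial) := by
    rw [tsum_mul_left, ← hexp]
  have hs3 : Summable fun n : ℕ => Real.exp (-T) * ((3 * x) ^ n / n.factorial) :=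
    (hs (3 * x)).mul_left _
  have hnn (n : ℕ) : 0 ≤ Real.exp (-T) * ((3 * x) ^ n / n.factorial) := by positivity
  rw [h3, ← hs3.sum_add_tsum_nat_add T]
  refine le_add_of_nonneg_of_le (Finset.sum_nonneg fun n _ => hnn n) ?_
  refine ((summable_nat_add_iff T).mpr (hs x)).tsum_le_tsum (fun n => ?_)
    ((summable_nat_add_iff T).mpr hs3)
  have he : 1 ≤ Real.exp (-T) * 3 ^ (n + T) := by
    have h3 : Real.exp 1 ≤ 3 := Real.exp_one_lt_three.le
    calc (1 : ℝ) = Real.exp (-T) * Real.exp 1 ^ T := by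
          rw [← Real.exp_nat_mul, ← Real.exp_add]; simp
      _ ≤ Real.exp (-T) * 3 ^ T := by gcongr
      _ ≤ Real.exp (-T) * 3 ^ (n + T) := by gcongr <;> norm_num
  calc x ^ (n + T) / (n + T).factorial
      ≤ (Real.exp (-T) * 3 ^ (n + T)) * (x ^ (n + T) / (n + T).factorial) :=
        le_mul_of_one_le_left (by positivity) he
    _ = _ := by rw [mul_pow]; ring

/-- An exponential polynomial with integer coefficients of bounded size which is uniformly small
on a disc. -/
theorem exists_small_exponential_polynomial (L M T : ℕ) (hL : 0 < L) (hM : 0 < M) {B : ℝ}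
    (hB : 1 ≤ B) {X H : ℕ} (hX : 0 < X) (hH : 0 < H)
    (hcard : (H + 1) ^ (2 * (T + L)) < (X + 1) ^ (L * M)) :
    ∃ c : Fin L × Fin M → ℤ, c ≠ 0 ∧ (∀ i, |c i| ≤ X) ∧ ∀ z : ℂ, ‖z‖ ≤ B →
      ‖∑ i, (c i : ℂ) * (z ^ (i.1 : ℕ) * Complex.exp (2 * Real.pi * Complex.I * z) ^ (i.2 : ℕ))‖ ≤
        (T + L) * (4 * ((L * M) * (B ^ L * Real.exp (7 * M * B)) * X) / H) +
        (L * M) * (X * (B ^ L * (Real.exp (-T) * Real.exp (21 * M * B)))) := by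
  have hB0 : 0 < B := by linarith
  have hπ : 2 * Real.pi ≤ 7 := by linarith [Real.pi_lt_d2]
  let ω : Fin M → ℂ := fun m => 2 * Real.pi * Complex.I * (m : ℕ)
  have hω (m : Fin M) : ‖ω m‖ ≤ 7 * M := by
    simp only [ω, norm_mul, Complex.norm_I, Complex.norm_natCast, Complex.norm_real,
      Real.norm_eq_abs, abs_of_pos Real.pi_pos, Complex.norm_ofNat, mul_one]
    gcongr
    exact m.2.le
  let E : Fin M → ℂ[X] := fun m =>
    ∑ i ∈ Finset.range T, Polynomial.C ((ω m) ^ i / i.factorial) * Polynomial.X ^ i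
  have hEcoeff (m : Fin M) (i : ℕ) :
      (E m).coeff i = if i < T then (ω m) ^ i / i.factorial else 0 := by
    simp [E, finsetSum_coeff, coeff_C_mul, coeff_X_pow]
  have hEeval (m : Fin M) (z : ℂ) :
      (E m).eval z = ∑ i ∈ Finset.range T, (ω m * z) ^ i / i.factorial := by
    simp only [E, eval_finsetSum, eval_mul, eval_C, eval_pow, eval_X]
    refine Finset.sum_congr rfl fun i _ => ?_
    rw [mul_pow]; ring
  let P : Fin L × Fin M → ℂ[X] := fun i => Polynomial.X ^ (i.1 : ℕ) * E i.2
  have hPdeg (i) : (P i).natDegree < T + L := by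
    have hE : (E i.2).natDegree ≤ T := by
      refine natDegree_sum_le_of_forall_le _ _ fun j hj => ?_
      exact (natDegree_C_mul_X_pow_le _ _).trans (Finset.mem_range.mp hj).le
    have := natDegree_mul_le (p := Polynomial.X ^ (i.1 : ℕ)) (q := E i.2)
    rw [natDegree_X_pow] at this
    have := i.1.2
    simp only [P]
    omega
  have hPcoeff (i) (j : ℕ) : B ^ j * ‖(P i).coeff j‖ ≤ B ^ L * Real.exp (7 * M * B) := by
    simp only [P, coeff_X_pow_mul', hEcoeff]
    split_ifs with h1 h2
    · rw [norm_div, norm_pow, Complex.norm_natCast]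
      calc B ^ j * (‖ω i.2‖ ^ (j - i.1) / (j - i.1).factorial)
          = B ^ (i.1 : ℕ) * ((‖ω i.2‖ * B) ^ (j - i.1) / (j - i.1).factorial) := by
            rw [← Nat.add_sub_cancel' h1]
            simp only [Nat.add_sub_cancel_left, pow_add, mul_pow]
            ring
        _ ≤ B ^ L * Real.exp (7 * M * B) := by
            gcongr
            · exact i.1.2.le
            · refine (Real.pow_div_factorial_le_exp _ (by positivity) _).trans ?_
              gcongr
              exact hω _
    all_goals simp only [norm_zero, mul_zero]; positivity
  have hLM : (0 : ℝ) < L * M := by positivity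
  obtain ⟨c, hc0, hcX, hc⟩ := exists_int_vec_small_linear_forms
    (fun (j : Fin (T + L)) i => (B : ℂ) ^ (j : ℕ) * (P i).coeff j)
    (W := (L * M) * (B ^ L * Real.exp (7 * M * B))) (by positivity) (fun j => by
      calc ∑ i, ‖(B : ℂ) ^ (j : ℕ) * (P i).coeff j‖
          ≤ ∑ i : Fin L × Fin M, B ^ L * Real.exp (7 * M * B) := by
            refine Finset.sum_le_sum fun i _ => ?_
            rw [norm_mul, norm_pow, Complex.norm_real, Real.norm_eq_abs, abs_of_pos hB0]
            exact hPcoeff i j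
        _ = _ := by simp) hX hH (by simpa using hcard)
  refine ⟨c, hc0, hcX, fun z hz => ?_⟩
  have hsplit : ∑ i, (c i : ℂ) *
      (z ^ (i.1 : ℕ) * Complex.exp (2 * Real.pi * Complex.I * z) ^ (i.2 : ℕ)) =
      ∑ i, (c i : ℂ) * (P i).eval z +
      ∑ i, (c i : ℂ) * (z ^ (i.1 : ℕ) * (Complex.exp (ω i.2 * z) - (E i.2).eval z)) := by
    rw [← Finset.sum_add_distrib]
    refine Finset.sum_congr rfl fun i _ => ?_
    rw [← Complex.exp_nat_mul]
    have : ((i.2 : ℕ) : ℂ) * (2 * Real.pi * Complex.I * z) = ω i.2 * z := by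
      simp only [ω]; ring
    simp only [this, P, eval_mul, eval_pow, eval_X]
    ring
  rw [hsplit]
  refine (norm_add_le _ _).trans (add_le_add ?_ ?_)
  · have hev : ∑ i, (c i : ℂ) * (P i).eval z =
        ∑ j : Fin (T + L), (∑ i, (c i : ℂ) * ((B : ℂ) ^ (j : ℕ) * (P i).coeff j)) *
          (z / B) ^ (j : ℕ) := by
      simp only [Finset.sum_mul]
      rw [Finset.sum_comm]
      refine Finset.sum_congr rfl fun i _ => ?_
      rw [eval_eq_sum_range' (hPdeg i), ← Fin.sum_univ_eq_sum_range
        (fun j => (P i).coeff j * z ^ j), Finset.mul_sum]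
      refine Finset.sum_congr rfl fun j _ => ?_
      have : (B : ℂ) ≠ 0 := by exact_mod_cast hB0.ne'
      rw [div_pow]
      field_simp
    rw [hev]
    calc _ ≤ ∑ j : Fin (T + L), 4 * ((L * M) * (B ^ L * Real.exp (7 * M * B)) * X) / H := by
          refine norm_sum_le_of_le _ fun j _ => ?_
          rw [norm_mul]
          refine (mul_le_of_le_one_right (norm_nonneg _) ?_).trans (hc j)
          rw [norm_pow, norm_div, Complex.norm_real, Real.norm_eq_abs, abs_of_pos hB0]
          exact pow_le_one₀ (by positivity) ((div_le_one hB0).mpr hz)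
      _ = _ := by simp
  · calc _ ≤ ∑ i : Fin L × Fin M, X * (B ^ L * (Real.exp (-T) * Real.exp (21 * M * B))) := by
          refine norm_sum_le_of_le _ fun i _ => ?_
          rw [norm_mul, norm_mul, norm_pow, Complex.norm_intCast, hEeval]
          gcongr
          · exact_mod_cast hcX i
          · exact (pow_le_pow_left₀ (norm_nonneg _) hz _).trans
              (pow_le_pow_right₀ hB i.1.2.le)
          · refine (Complex.norm_exp_sub_sum_le_exp_neg_mul _ _).trans ?_
            refine mul_le_mul_of_nonneg_left (Real.exp_le_exp.mpr ?_) (Real.exp_pos _).le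
            rw [norm_mul]
            calc 3 * (‖ω i.2‖ * ‖z‖) ≤ 3 * (7 * M * B) := by
                  gcongr
                  exact hω _
              _ = 21 * M * B := by ring
      _ = _ := by simp

theorem sum_abs_coeff_sum_C_mul_X_pow_le {ι : Type*} (s : Finset ι) (a : ι → ℤ) (e : ι → ℕ)
    {D : ℕ} (he : ∀ i ∈ s, e i ≤ D) :
    ∑ j ∈ Finset.range (D + 1), |((∑ i ∈ s, C (a i) * X ^ e i : ℤ[X]).coeff j : ℝ)| ≤
      ∑ i ∈ s, |(a i : ℝ)| := by
  calc ∑ j ∈ Finset.range (D + 1), |((∑ i ∈ s, C (a i) * X ^ e i : ℤ[X]).coeff j : ℝ)|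
      ≤ ∑ j ∈ Finset.range (D + 1), ∑ i ∈ s, if j = e i then |(a i : ℝ)| else 0 := by
        refine Finset.sum_le_sum fun j _ => ?_
        rw [finsetSum_coeff, Int.cast_sum]
        refine (Finset.abs_sum_le_sum_abs _ _).trans (Finset.sum_le_sum fun i _ => ?_)
        rw [coeff_C_mul, coeff_X_pow]
        split_ifs <;> simp
    _ = ∑ i ∈ s, |(a i : ℝ)| := by
        rw [Finset.sum_comm]
        refine Finset.sum_congr rfl fun i hi => ?_
        rw [Finset.sum_ite_eq', if_pos]
        exact Finset.mem_range.mpr (Nat.lt_succ_of_le (he i hi))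

theorem norm_pow_sub_pow_le {θ ζ : ℂ} (hθ : ‖θ‖ ≤ 2) (hζ : ‖ζ‖ ≤ 2) (n : ℕ) :
    ‖θ ^ n - ζ ^ n‖ ≤ n * 2 ^ n * ‖θ - ζ‖ := by
  induction n with
  | zero => simp
  | succ n ih =>
    have h : θ ^ (n + 1) - ζ ^ (n + 1) = θ * (θ ^ n - ζ ^ n) + (θ - ζ) * ζ ^ n := by ring
    rw [h]
    calc ‖θ * (θ ^ n - ζ ^ n) + (θ - ζ) * ζ ^ n‖
        ≤ ‖θ‖ * ‖θ ^ n - ζ ^ n‖ + ‖θ - ζ‖ * ‖ζ‖ ^ n := by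
          rw [← norm_mul, ← norm_pow, ← norm_mul]
          exact norm_add_le _ _
      _ ≤ 2 * (n * 2 ^ n * ‖θ - ζ‖) + ‖θ - ζ‖ * 2 ^ n := by gcongr
      _ ≤ 2 * (n * 2 ^ n * ‖θ - ζ‖) + 2 * (‖θ - ζ‖ * 2 ^ n) := by
          have : 0 ≤ ‖θ - ζ‖ * 2 ^ n := by positivity
          linarith
      _ = (n + 1 : ℕ) * 2 ^ (n + 1) * ‖θ - ζ‖ := by push_cast; ring

/-- The core of Gelfond's method: a root of unity cannot be too close to `θ`, as soon as the
auxiliary parameters satisfy the stated inequalities. -/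
theorem gelfond_contradiction {θ : ℂ} (hθ0 : θ ≠ 0) (hθ : ∀ n : ℕ, 0 < n → θ ^ n ≠ 1)
    {A : ℝ} {d : ℕ} (hA : ∀ (Q : ℤ[X]) (D : ℕ) (B : ℝ), Q.natDegree ≤ D → 1 ≤ B →
      ∑ i ∈ Finset.range (D + 1), |(Q.coeff i : ℝ)| ≤ B → aeval θ Q ≠ 0 →
      1 ≤ A ^ D * B ^ d * ‖aeval θ Q‖) (hA1 : 1 ≤ A)
    {L M T N H S B k b : ℕ} (hL : 0 < L) (hM : 0 < M) (hN : 0 < N) (hH : 0 < H)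
    (hB : 2 * S + M = B) (hk : 0 < k) (hb : b ≤ k)
    (hcard : (H + 1) ^ (2 * (T + L)) < (N + 1) ^ (L * M)) (hcount : (L - 1) * M < S * S)
    (hθ2 : ‖θ‖ ≤ 2) {ζ : ℂ} (hζ : ζ = Complex.exp (2 * Real.pi * Complex.I * (b / k)))
    (hinj : ∀ r : ℕ, 0 < r → r < S → ζ ^ r ≠ 1)
    (hsmall : A ^ (M * B) * (L * M * (N * (k * B : ℝ) ^ L)) ^ d * (k ^ L *
        ((T + L) * (4 * ((L * M) * ((B : ℝ) ^ L * Real.exp (7 * M * B)) * N) / H) +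
          (L * M) * (N * ((B : ℝ) ^ L * (Real.exp (-T) * Real.exp (21 * M * B))))) +
        L * M * (N * (k * B : ℝ) ^ L) * ((M * B : ℕ) * 2 ^ (M * B) * ‖θ - ζ‖)) < 1) :
    False := by
  have hB1 : (1 : ℝ) ≤ B := by
    have : 1 ≤ B := by omega
    exact_mod_cast this
  have hk1 : (1 : ℝ) ≤ k := by exact_mod_cast hk
  have hkC : (k : ℂ) ≠ 0 := by exact_mod_cast hk.ne'
  have hζ1 : ‖ζ‖ = 1 := by
    rw [hζ, show 2 * Real.pi * Complex.I * (b / k : ℂ) =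
      ((2 * Real.pi * (b / k) : ℝ) : ℂ) * Complex.I by push_cast; ring]
    exact Complex.norm_exp_ofReal_mul_I _
  have hexp (r s : ℕ) :
      Complex.exp (2 * Real.pi * Complex.I * ((b * r + k * s : ℕ) / k)) = ζ ^ r := by
    rw [hζ, ← Complex.exp_nat_mul, ← mul_one (Complex.exp (r * _)), ← Complex.exp_nat_mul_two_pi_mul_I s, ← Complex.exp_add]
    congr 1
    push_cast
    field_simp
  obtain ⟨c, hc0, hcN, hc⟩ := exists_small_exponential_polynomial L M T hL hM hB1 hN hH hcard
  have hvanish : ∀ r < S + M, ∀ s < S, ∑ i, (c i : ℂ) *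
      (((b * r + k * s : ℕ) : ℂ) ^ (i.1 : ℕ) * k ^ (L - i.1)) * θ ^ ((i.2 : ℕ) * r) = 0 := by
    intro r hr s hs
    let a : Fin L × Fin M → ℤ := fun i => c i * ((b * r + k * s : ℕ) ^ (i.1 : ℕ) * k ^ (L - i.1))
    let Q : ℤ[X] := ∑ i, C (a i) * X ^ ((i.2 : ℕ) * r)
    have hQ (u : ℂ) : aeval u Q = ∑ i, (c i : ℂ) *
      (((b * r + k * s : ℕ) : ℂ) ^ (i.1 : ℕ) * k ^ (L - i.1)) * u ^ ((i.2 : ℕ) * r) := by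
      simp [Q, a]
    have hle : b * r + k * s ≤ k * B := by
      calc b * r + k * s ≤ k * (S + M) + k * S := by gcongr
        _ = k * B := by rw [← hB]; ring
    have hleR : ((b * r + k * s : ℕ) : ℝ) ≤ k * B := by exact_mod_cast hle
    have ha (i) : |(a i : ℝ)| ≤ N * (k * B : ℝ) ^ L := by
      simp only [a]
      rw [Int.cast_mul, abs_mul]
      have h1 : |(c i : ℝ)| ≤ N := by exact_mod_cast hcN i
      refine mul_le_mul h1 ?_ (abs_nonneg _) (by positivity)
      have hpow : (k * B : ℝ) ^ L = (k * B) ^ (i.1 : ℕ) * (k * B) ^ (L - i.1) := by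
        rw [← pow_add, Nat.add_sub_cancel' i.1.2.le]
      rw [hpow]
      push_cast at hleR ⊢
      rw [abs_of_nonneg (by positivity)]
      gcongr
      exact le_mul_of_one_le_right (by positivity) hB1
    have hsum : ∑ i, |(a i : ℝ)| ≤ L * M * (N * (k * B : ℝ) ^ L) := by
      refine (Finset.sum_le_sum fun i _ => ha i).trans_eq ?_
      simp
    have he (i : Fin L × Fin M) : (i.2 : ℕ) * r ≤ M * B :=
      Nat.mul_le_mul i.2.2.le (by omega)
    by_contra hne
    rw [← hQ] at hne
    have hW : (1 : ℝ) ≤ L * M * (N * (k * B : ℝ) ^ L) := by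
      have h1 : (1 : ℝ) ≤ L := by exact_mod_cast hL
      have h2 : (1 : ℝ) ≤ M := by exact_mod_cast hM
      have h3 : (1 : ℝ) ≤ N := by exact_mod_cast hN
      have h4 : (1 : ℝ) ≤ (k * B : ℝ) ^ L := one_le_pow₀ (one_le_mul_of_one_le_of_one_le hk1 hB1)
      exact one_le_mul_of_one_le_of_one_le (one_le_mul_of_one_le_of_one_le h1 h2)
        (one_le_mul_of_one_le_of_one_le h3 h4)
    have hlow := hA Q (M * B) _
      (natDegree_sum_le_of_forall_le _ _ fun i _ => (natDegree_C_mul_X_pow_le _ _).trans (he i)) hW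
      ((sum_abs_coeff_sum_C_mul_X_pow_le _ _ _ fun i _ => he i).trans hsum) hne
    refine absurd (hlow.trans ?_) (not_le.mpr hsmall)
    gcongr
    rw [← sub_add_cancel (aeval θ Q) (aeval ζ Q), add_comm]
    refine (norm_add_le _ _).trans (add_le_add ?_ ?_)
    · have hz : ‖((b * r + k * s : ℕ) / k : ℂ)‖ ≤ B := by
        rw [norm_div, Complex.norm_natCast, Complex.norm_natCast, div_le_iff₀ (by positivity)]
        exact hleR.trans_eq (mul_comm _ _)
      have heq : aeval ζ Q = (k : ℂ) ^ L * ∑ i, (c i : ℂ) *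
          (((b * r + k * s : ℕ) / k : ℂ) ^ (i.1 : ℕ) * Complex.exp (2 * Real.pi * Complex.I *
            ((b * r + k * s : ℕ) / k)) ^ (i.2 : ℕ)) := by
        rw [hQ, Finset.mul_sum, hexp]
        refine Finset.sum_congr rfl fun i _ => ?_
        have : (k : ℂ) ^ L = k ^ (i.1 : ℕ) * k ^ (L - i.1) := by
          rw [← pow_add, Nat.add_sub_cancel' i.1.2.le]
        rw [this, div_pow, ← pow_mul, mul_comm r]
        field_simp
      rw [heq, norm_mul, norm_pow, Complex.norm_natCast]
      gcongr
      exact hc _ hz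
    · rw [hQ, hQ, ← Finset.sum_sub_distrib]
      calc _ ≤ ∑ i, |(a i : ℝ)| * ((M * B : ℕ) * 2 ^ (M * B) * ‖θ - ζ‖) := by
            refine norm_sum_le_of_le _ fun i _ => ?_
            rw [← mul_sub, norm_mul]
            refine mul_le_mul (le_of_eq ?_) ?_ (norm_nonneg _) (abs_nonneg _)
            · rw [← Complex.norm_intCast]
              simp [a]
            · refine (norm_pow_sub_pow_le hθ2 (by rw [hζ1]; norm_num) _).trans ?_
              have h1 : (((i.2 : ℕ) * r : ℕ) : ℝ) ≤ (M * B : ℕ) := by exact_mod_cast he i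
              have h2 : (2 : ℝ) ^ ((i.2 : ℕ) * r) ≤ 2 ^ (M * B) :=
                pow_le_pow_right₀ (by norm_num) (he i)
              exact mul_le_mul_of_nonneg_right
                (mul_le_mul h1 h2 (by positivity) (by positivity)) (norm_nonneg _)
        _ ≤ _ := by
            rw [← Finset.sum_mul]
            gcongr
  let g : ℕ × ℕ → ℂ := fun q => (b * q.1 + k * q.2 : ℕ)
  let pts : Finset ℂ := (Finset.range S ×ˢ Finset.range S).image g
  have hlt : ∀ r < S, ∀ r' < S, ζ ^ r = ζ ^ r' → r ≤ r' := by
    intro r hr r' hr' h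
    by_contra! hlt
    refine hinj (r - r') (by omega) (by omega) ?_
    have hζ0 : ζ ≠ 0 := by rw [← norm_ne_zero_iff, hζ1]; norm_num
    rw [pow_sub₀ _ hζ0 hlt.le, h, mul_inv_cancel₀ (pow_ne_zero _ hζ0)]
  have hgcard : pts.card = S * S := by
    rw [Finset.card_image_of_injOn, Finset.card_product, Finset.card_range]
    rintro ⟨r, s⟩ h ⟨r', s'⟩ h' heq
    simp only [Finset.coe_product, Finset.coe_range, Set.mem_prod, Set.mem_Iio] at h h'
    simp only [g] at heq
    have hpow : ζ ^ r = ζ ^ r' := by rw [← hexp r s, ← hexp r' s', heq]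
    obtain rfl : r = r' := le_antisymm (hlt r h.1 r' h'.1 hpow) (hlt r' h'.1 r h.1 hpow.symm)
    have heq' : b * r + k * s = b * r + k * s' := by exact_mod_cast heq
    have := Nat.eq_of_mul_eq_mul_left hk (Nat.add_left_cancel heq')
    rw [this]
  have hR (w : ℂ) : ∃ r, w ∈ pts → r < S ∧ ∃ s < S, g (r, s) = w := by
    by_cases hw : w ∈ pts
    · obtain ⟨⟨r, s⟩, hq, rfl⟩ := Finset.mem_image.mp hw
      rw [Finset.mem_product, Finset.mem_range, Finset.mem_range] at hq
      exact ⟨r, fun _ => ⟨hq.1, s, hq.2, rfl⟩⟩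
    · exact ⟨0, fun h => absurd h hw⟩
  choose R hR using hR
  let p : Fin M → ℂ[X] := fun m => ∑ l : Fin L, C ((c (l, m) : ℂ) * k ^ (L - l)) * X ^ (l : ℕ)
  have hp0 : p = 0 := by
    refine zero_estimate hθ0 hθ (L := L) p (fun m => ?_) b pts R (fun w hw j hj => ?_)
      (hgcard ▸ hcount)
    · refine lt_of_le_of_lt (natDegree_sum_le_of_forall_le (n := L - 1) _ _ fun l _ => ?_)
        (Nat.sub_lt hL one_pos)
      exact (natDegree_C_mul_X_pow_le _ _).trans (Nat.le_sub_one_of_lt l.2)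
    · obtain ⟨hr, s, hs, hw⟩ := hR w hw
      rw [← hvanish (R w + j) (by omega) s hs, Fintype.sum_prod_type_right]
      refine Finset.sum_congr rfl fun m _ => ?_
      simp only [p, eval_finsetSum, Finset.sum_mul, eval_mul, eval_C, eval_pow, eval_X]
      refine Finset.sum_congr rfl fun l _ => ?_
      have : w + b * j = (b * (R w + j) + k * s : ℕ) := by
        have : w + b * j = g (R w, s) + b * j := by rw [hw]
        rw [this]
        simp only [g]
        push_cast
        ring
      rw [this]
      ring
  refine hc0 (funext fun ⟨l, m⟩ => ?_)
  have hcoeff : (p m).coeff l = (c (l, m) : ℂ) * k ^ (L - l) := by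
    simp only [p, finsetSum_coeff, coeff_C_mul_X_pow]
    simp [Fin.val_inj]
  rw [hp0, Pi.zero_apply, coeff_zero] at hcoeff
  have := (mul_eq_zero.mp hcoeff.symm).resolve_right (pow_ne_zero _ hkC)
  exact_mod_cast this

theorem gelfond_parameters_lt_one {E a lm N kb kl tl bl e₁ e₂ mb p t δ H : ℝ} {d : ℕ} (hE : 4 ≤ E)
    (ha : a ≤ E) (hlm : lm ≤ E) (hN : N ≤ E) (hkb : kb ≤ E) (hkl : kl ≤ E) (htl : tl ≤ E)
    (hbl : bl ≤ E) (he₁ : e₁ ≤ E) (he₂ : e₂ ≤ E) (hmb : mb ≤ E) (hp : p ≤ E)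
    (hlm' : 0 ≤ lm) (hN' : 0 ≤ N) (hkb' : 0 ≤ kb) (hkl' : 0 ≤ kl) (htl' : 0 ≤ tl) (hbl' : 0 ≤ bl)
    (he₁' : 0 ≤ e₁) (he₂' : 0 ≤ e₂) (hmb' : 0 ≤ mb) (hp' : 0 ≤ p) (ht' : 0 ≤ t) (hδ' : 0 ≤ δ)
    (hH : 4 * E ^ (3 * d + 8) ≤ H) (ht : 4 * E ^ (3 * d + 6) * t ≤ 1)
    (hδ : 4 * E ^ (3 * d + 6) * δ ≤ 1) :
    a * (lm * (N * kb)) ^ d * (kl * (tl * (4 * (lm * (bl * e₁) * N) / H) +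
      lm * (N * (bl * (t * e₂)))) + lm * (N * kb) * (mb * p * δ)) < 1 := by
  have hE0 : 0 < E := by linarith
  have hH0 : 0 < H := lt_of_lt_of_le (by positivity) hH
  calc _ ≤ E * (E * (E * E)) ^ d * (E * (E * (E * (E * (E * E) * E) / H) +
        E * (E * (E * (t * E)))) + E * (E * E) * (E * E * δ)) := by gcongr
    _ = E ^ (3 * d + 8) / H + E ^ (3 * d + 6) * t + E ^ (3 * d + 6) * δ := by
        have : (E * (E * E)) ^ d = E ^ (3 * d) := by rw [pow_mul]; ring_nf
        rw [this]; ring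
    _ ≤ 1 / 4 + 1 / 4 + 1 / 4 := by
        refine add_le_add (add_le_add ?_ (by linarith)) (by linarith)
        rw [div_le_iff₀ hH0]
        linarith
    _ < 1 := by norm_num

theorem Real.exp_le_pow_two_mul_two (n : ℕ) : Real.exp n ≤ (2 : ℝ) ^ (2 * n) := by
  rw [pow_mul, ← Real.exp_one_pow]
  exact pow_le_pow_left₀ (Real.exp_pos _).le (by linarith [Real.exp_one_lt_three]) _

theorem two_pow_le_exp (n : ℕ) : (2 : ℝ) ^ n ≤ Real.exp n := by
  rw [← Real.exp_one_pow]
  exact pow_le_pow_left₀ (by norm_num) (by linarith [Real.add_one_le_exp 1]) _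

set_option maxHeartbeats 1000000 in
/-- An algebraic number which is not a root of unity is not exponentially well approximable by
`k`-th roots of unity. -/
theorem eventually_exp_neg_mul_le_norm_sub {θ : ℂ} (hθalg : IsAlgebraic ℤ θ) (hθ0 : θ ≠ 0)
    (hθ : ∀ n : ℕ, 0 < n → θ ^ n ≠ 1) {ε : ℝ} (hε : 0 < ε) :
    ∀ᶠ k : ℕ in atTop, ∀ ζ : ℂ, ζ ^ k = 1 → Real.exp (-ε * k) ≤ ‖θ - ζ‖ := by
  obtain ⟨A, hA1, d, hA⟩ := exists_liouville_bound hθalg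
  obtain ⟨q, hq⟩ := exists_nat_ge (Real.log A)
  obtain ⟨e, he⟩ := exists_nat_ge (1 / ε)
  have hpoly : ∀ᶠ n : ℕ in atTop, (n : ℝ) ^ 20 ≤ Real.exp n := by
    have h := (Real.isLittleO_pow_exp_atTop (n := 20)).comp_tendsto tendsto_natCast_atTop_atTop
    filter_upwards [h.bound one_pos] with n hn
    simpa using hn
  have hpar : ∀ᶠ n : ℕ in atTop, (n : ℝ) ^ 20 ≤ Real.exp n ∧
      12288 + 3 * q + 100 * (d + 1) + e * (3 * d + 8) ≤ n :=
    hpoly.and (eventually_ge_atTop _)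
  obtain ⟨n₀, hn₀⟩ := eventually_atTop.mp hpar
  filter_upwards [eventually_ge_atTop (n₀ ^ 12)] with k hk ζ hζ
  have hex : ∃ n, k < (n + 1) ^ 12 :=
    ⟨k, (Nat.lt_succ_self k).trans_le (Nat.le_self_pow (by norm_num) _)⟩
  obtain ⟨n, hn0, hnk, hkn⟩ : ∃ n, n₀ ≤ n ∧ n ^ 12 ≤ k ∧ k < (n + 1) ^ 12 := by
    refine ⟨Nat.find hex, ?_, ?_, Nat.find_spec hex⟩
    · by_contra! h
      exact absurd (Nat.find_spec hex) (not_lt.mpr ((Nat.pow_le_pow_left h 12).trans hk))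
    · rcases Nat.eq_zero_or_eq_succ_pred (Nat.find hex) with h | h
      · rw [h]; simp
      · rw [h]
        exact not_lt.mp (Nat.find_min hex (m := (Nat.find hex).pred) (by rw [Nat.pred_eq_sub_one]; omega))
  obtain ⟨hn20, hnbig⟩ := hn₀ n hn0
  by_contra! hlt
  have hn1 : 1 ≤ n := by omega
  have hk0 : 0 < k := lt_of_lt_of_le (by positivity) hnk
  have hζ1 : ‖ζ‖ = 1 := Complex.norm_eq_one_of_pow_eq_one hζ hk0.ne'
  have hδ1 : ‖θ - ζ‖ ≤ 1 := hlt.le.trans (Real.exp_le_one_iff.mpr (by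
    rw [neg_mul]; exact neg_nonpos.mpr (by positivity)))
  have hθ2 : ‖θ‖ ≤ 2 := by
    have := norm_add_le (θ - ζ) ζ
    rw [sub_add_cancel] at this
    linarith
  obtain ⟨b, hbk, hb⟩ : ∃ b < k, Complex.exp (2 * Real.pi * Complex.I * (b / k)) = ζ := by
    have : NeZero k := ⟨hk0.ne'⟩
    have hu : IsUnit ζ := IsUnit.of_pow_eq_one hζ hk0.ne'
    have := (Complex.mem_rootsOfUnity k hu.unit).mp (by
      rw [mem_rootsOfUnity]; ext; simpa using hζ)
    simpa using this
  have hnR : (1 : ℝ) ≤ n := by exact_mod_cast hn1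
  have hnbigR : (12288 + 3 * q + 100 * (d + 1) + e * (3 * d + 8) : ℝ) ≤ n := by
    exact_mod_cast hnbig
  set E := Real.exp ((n ^ 10 : ℕ) : ℝ) with hE
  have hpow (i : ℕ) : (1 : ℝ) ≤ (n : ℝ) ^ i := one_le_pow₀ hnR
  have hmono {i j : ℕ} (h : i ≤ j) : (n : ℝ) ^ i ≤ (n : ℝ) ^ j := pow_le_pow_right₀ hnR h
  have hexpE : Real.exp n ≤ E := by
    refine Real.exp_le_exp.mpr ?_
    push_cast
    exact le_self_pow₀ hnR (by norm_num)
  have hn20E : (n : ℝ) ^ 20 ≤ E := hn20.trans hexpE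
  have hE4 : 4 ≤ E := by
    have h1 : (n : ℝ) ^ 1 ≤ n ^ 20 := hmono (by norm_num)
    have : (0 : ℝ) ≤ e * (3 * d + 8) := by positivity
    have h3 : (0 : ℝ) ≤ d := by positivity
    have h4 : (0 : ℝ) ≤ q := by positivity
    linarith
  have hE1 : 1 ≤ E := by linarith
  have hd0 : (0 : ℝ) ≤ d := Nat.cast_nonneg d
  have hq0 : (0 : ℝ) ≤ q := Nat.cast_nonneg q
  have hed : (0 : ℝ) ≤ e * (3 * d + 8) := by positivity
  have hB3 : (2 * n ^ 6 + n ^ 3 : ℕ) ≤ 3 * n ^ 6 := by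
    have : n ^ 3 ≤ n ^ 6 := Nat.pow_le_pow_right hn1 (by norm_num)
    omega
  have hMB : n ^ 3 * (2 * n ^ 6 + n ^ 3) ≤ 3 * n ^ 9 := by
    calc n ^ 3 * (2 * n ^ 6 + n ^ 3) ≤ n ^ 3 * (3 * n ^ 6) := by gcongr
      _ = 3 * n ^ 9 := by ring
  have hMBR : ((n ^ 3 * (2 * n ^ 6 + n ^ 3) : ℕ) : ℝ) ≤ 3 * n ^ 9 := by exact_mod_cast hMB
  have h910 {c : ℝ} (hc : c ≤ n) : c * n ^ 9 ≤ (n : ℝ) ^ 10 := by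
    calc c * n ^ 9 ≤ n * n ^ 9 := by gcongr
      _ = (n : ℝ) ^ 10 := by ring
  have hA' : A ^ (n ^ 3 * (2 * n ^ 6 + n ^ 3)) ≤ E := by
    rw [← Real.exp_log (show 0 < A by linarith), ← Real.exp_nat_mul]
    refine Real.exp_le_exp.mpr ?_
    calc _ ≤ (3 * n ^ 9) * (q : ℝ) := by
          gcongr
          exact Real.log_nonneg hA1
      _ = (3 * q) * (n : ℝ) ^ 9 := by ring
      _ ≤ (n : ℝ) ^ 10 := h910 (by linarith)
      _ = _ := by push_cast; rfl
  have h2' : (2 : ℝ) ^ (n ^ 3 * (2 * n ^ 6 + n ^ 3)) ≤ E := by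
    refine (two_pow_le_exp _).trans (Real.exp_le_exp.mpr ?_)
    push_cast at hMBR ⊢
    exact hMBR.trans (h910 (by linarith))
  have hkB : ((k : ℝ) * (2 * n ^ 6 + n ^ 3 : ℕ)) ^ (n ^ 9) ≤ E := by
    have hk2 : (k : ℝ) ≤ 4096 * n ^ 12 := by
      calc (k : ℝ) ≤ (n + 1) ^ 12 := by exact_mod_cast hkn.le
        _ ≤ (2 * n) ^ 12 := by gcongr; linarith
        _ = 4096 * n ^ 12 := by ring
    have hB3R : ((2 * n ^ 6 + n ^ 3 : ℕ) : ℝ) ≤ 3 * n ^ 6 := by exact_mod_cast hB3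
    calc _ ≤ Real.exp n ^ (n ^ 9) := by
          gcongr
          calc (k : ℝ) * (2 * n ^ 6 + n ^ 3 : ℕ) ≤ (4096 * n ^ 12) * (3 * n ^ 6) := by gcongr
            _ = 12288 * n ^ 18 := by ring
            _ ≤ n * n ^ 18 := by gcongr; linarith
            _ = (n : ℝ) ^ 19 := by ring
            _ ≤ (n : ℝ) ^ 20 := hmono (by norm_num)
            _ ≤ Real.exp n := hn20
      _ = E := by
          rw [← Real.exp_nat_mul, hE]
          push_cast
          ring_nf
  have hB1 : (1 : ℝ) ≤ (2 * n ^ 6 + n ^ 3 : ℕ) := by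
    have : 1 ≤ 2 * n ^ 6 + n ^ 3 := le_add_left (Nat.one_le_pow _ _ hn1)
    exact_mod_cast this
  have hk1 : (1 : ℝ) ≤ k := by exact_mod_cast hk0
  have hT {i : ℕ} (hi : ((3 * d + 8 : ℕ) : ℝ) * n ^ 10 ≤ i) :
      4 * E ^ (3 * d + 6) * Real.exp (-i) ≤ 1 := by
    calc 4 * E ^ (3 * d + 6) * Real.exp (-i) ≤ E * E ^ (3 * d + 6) * Real.exp (-i) := by gcongr
      _ = E ^ (3 * d + 7) * Real.exp (-i) := by ring
      _ ≤ E ^ (3 * d + 8) * Real.exp (-i) := by gcongr 1; exact pow_le_pow_right₀ hE1 (by omega)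
      _ ≤ 1 := by
        rw [hE, ← Real.exp_nat_mul, ← Real.exp_add, Real.exp_le_one_iff]
        push_cast at hi ⊢
        linarith
  have hδ : 4 * E ^ (3 * d + 6) * ‖θ - ζ‖ ≤ 1 := by
    refine le_trans ?_ (hT (i := (3 * d + 8) * n ^ 10) (by push_cast; rfl))
    gcongr
    refine hlt.le.trans (Real.exp_le_exp.mpr ?_)
    have h1 : 1 ≤ ε * e := by rwa [div_le_iff₀' hε] at he
    have h2 : ((n : ℝ) ^ 12) ≤ k := by exact_mod_cast hnk
    rw [neg_mul]
    refine neg_le_neg ?_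
    push_cast
    calc (3 * d + 8) * (n : ℝ) ^ 10 ≤ (ε * e) * ((3 * d + 8) * (n : ℝ) ^ 10) :=
          le_mul_of_one_le_left (by positivity) h1
      _ = ε * ((e * (3 * d + 8)) * (n : ℝ) ^ 10) := by ring
      _ ≤ ε * (n * n ^ 10) := by gcongr; linarith
      _ = ε * n ^ 11 := by ring
      _ ≤ ε * n ^ 12 := mul_le_mul_of_nonneg_left (hmono (by norm_num)) hε.le
      _ ≤ ε * k := by gcongr
  have hinj : ∀ r : ℕ, 0 < r → r < n ^ 6 → ζ ^ r ≠ 1 := by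
    intro r hr hrn hζr
    have hrM : r ≤ n ^ 3 * (2 * n ^ 6 + n ^ 3) := by
      refine hrn.le.trans ?_
      calc n ^ 6 = n ^ 3 * n ^ 3 := by ring
        _ ≤ n ^ 3 * (2 * n ^ 6 + n ^ 3) := by gcongr; exact Nat.le_add_left _ _
    have hne : aeval θ (X ^ r - 1 : ℤ[X]) ≠ 0 := by
      simpa [sub_eq_zero] using hθ r hr
    have hlow := hA (X ^ r - 1) r 2 (natDegree_X_pow_sub_C (n := r) (r := (1 : ℤ))).le
      (by norm_num) (by
        have h := sum_abs_coeff_sum_C_mul_X_pow_le (Finset.univ : Finset (Fin 2)) ![1, -1] ![r, 0]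
          (D := r) (by intro i _; fin_cases i <;> simp)
        simp [Fin.sum_univ_two, ← sub_eq_add_neg] at h ⊢
        linarith) hne
    have hup : ‖aeval θ (X ^ r - 1 : ℤ[X])‖ ≤ E * E * ‖θ - ζ‖ := by
      have h := norm_pow_sub_pow_le hθ2 (by rw [hζ1]; norm_num : ‖ζ‖ ≤ 2) r
      rw [hζr] at h
      have h1 : (r : ℝ) ≤ E := by
        have : (r : ℝ) ≤ n ^ 6 := by exact_mod_cast hrn.le
        exact this.trans ((hmono (by norm_num)).trans hn20E)
      have h2 : (2 : ℝ) ^ r ≤ E := (pow_le_pow_right₀ (by norm_num) hrM).trans h2'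
      simp only [map_sub, map_pow, aeval_X, map_one]
      refine h.trans ?_
      gcongr
    have : A ^ r * 2 ^ d * ‖aeval θ (X ^ r - 1 : ℤ[X])‖ < 1 := by
      calc _ ≤ E * E ^ d * (E * E * ‖θ - ζ‖) := by
            gcongr
            · exact (pow_le_pow_right₀ hA1 hrM).trans hA'
            · linarith
        _ = E ^ (d + 3) * ‖θ - ζ‖ := by ring
        _ ≤ E ^ (3 * d + 6) * ‖θ - ζ‖ := by gcongr 1; exact pow_le_pow_right₀ hE1 (by omega)
        _ < 1 := by linarith
    linarith
  have hN1 : 1 ≤ 2 ^ (n ^ 10) := Nat.one_le_two_pow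
  have hHE : 4 * E ^ (3 * d + 8) + 1 ≤ (((2 ^ n ^ 10) ^ (2 * (3 * d + 10)) : ℕ) : ℝ) := by
    calc 4 * E ^ (3 * d + 8) + 1 ≤ E * E ^ (3 * d + 8) + E * E ^ (3 * d + 8) := by
          gcongr
          exact one_le_mul_of_one_le_of_one_le hE1 (one_le_pow₀ hE1)
      _ = 2 * E ^ (3 * d + 9) := by ring
      _ ≤ E * E ^ (3 * d + 9) := by gcongr; linarith
      _ = E ^ (3 * d + 10) := by ring
      _ ≤ (2 ^ (2 * n ^ 10)) ^ (3 * d + 10) := by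
          gcongr
          exact Real.exp_le_pow_two_mul_two _
      _ = _ := by
          push_cast
          rw [← pow_mul, ← pow_mul]
          ring_nf
  have hHpos : 1 < (2 ^ n ^ 10) ^ (2 * (3 * d + 10)) := by
    have : (1 : ℝ) < (((2 ^ n ^ 10) ^ (2 * (3 * d + 10)) : ℕ) : ℝ) := by
      refine lt_of_lt_of_le ?_ hHE
      have : 0 < 4 * E ^ (3 * d + 8) := by positivity
      linarith
    exact_mod_cast this
  refine gelfond_contradiction hθ0 hθ hA hA1 (L := n ^ 9) (M := n ^ 3) (T := n ^ 11)
    (N := 2 ^ n ^ 10) (H := (2 ^ n ^ 10) ^ (2 * (3 * d + 10)) - 1) (S := n ^ 6)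
    (B := 2 * n ^ 6 + n ^ 3) (k := k) (b := b) (by positivity) (by positivity) (by positivity)
    (Nat.sub_pos_of_lt hHpos) rfl hk0 hbk.le ?_ ?_ hθ2 hb.symm hinj ?_
  · rw [Nat.sub_add_cancel hHpos.le, ← pow_mul, ← pow_add n 9 3]
    refine lt_of_le_of_lt (Nat.pow_le_pow_right hN1 ?_)
      (Nat.pow_lt_pow_left (Nat.lt_succ_self _) (by positivity))
    calc 2 * (3 * d + 10) * (2 * (n ^ 11 + n ^ 9)) ≤ 2 * (3 * d + 10) * (2 * (n ^ 11 + n ^ 11)) := by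
          gcongr
          norm_num
      _ = (8 * (3 * d + 10)) * n ^ 11 := by ring
      _ ≤ n * n ^ 11 := by gcongr; nlinarith [Nat.zero_le (e * (3 * d + 8))]
      _ = n ^ (9 + 3) := by ring
  · rw [Nat.sub_mul, one_mul]
    have h1 : 0 < n ^ 3 := by positivity
    have h2 : n ^ 9 * n ^ 3 = n ^ 6 * n ^ 6 := by ring
    have h3 : 0 < n ^ 6 * n ^ 6 := by positivity
    omega
  · refine gelfond_parameters_lt_one hE4 hA' ?_ ?_ hkB ?_ ?_ ?_ ?_ ?_ ?_ h2' (by positivity)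
      (by positivity) (by positivity) (by positivity) (by positivity)
      (by positivity) (by positivity) (by positivity) (by positivity) (by positivity)
      (by positivity) (by positivity) ?_ (hT ?_) hδ
    · push_cast
      rw [← pow_add]
      exact (hmono (by norm_num)).trans hn20E
    · push_cast
      exact two_pow_le_exp _
    · exact (pow_le_pow_left₀ (by positivity) (le_mul_of_one_le_right (by positivity) hB1) _).trans hkB
    · push_cast
      calc (n : ℝ) ^ 11 + (n : ℝ) ^ 9 ≤ (n : ℝ) ^ 11 + (n : ℝ) ^ 11 := by gcongr; norm_num
        _ = 2 * (n : ℝ) ^ 11 := by ring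
        _ ≤ n * (n : ℝ) ^ 11 := by gcongr; linarith
        _ = (n : ℝ) ^ 12 := by ring
        _ ≤ E := (hmono (by norm_num)).trans hn20E
    · exact (pow_le_pow_left₀ (by positivity) (le_mul_of_one_le_left (by positivity) hk1) _).trans hkB
    · refine Real.exp_le_exp.mpr ?_
      push_cast at hMBR ⊢
      linarith [h910 (c := 21) (by linarith)]
    · refine Real.exp_le_exp.mpr ?_
      push_cast at hMBR ⊢
      linarith [h910 (c := 63) (by linarith)]
    · refine hMBR.trans ((h910 (by linarith)).trans ((hmono (by norm_num)).trans hn20E))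
    · rw [Nat.cast_sub hHpos.le]
      push_cast at hHE ⊢
      linarith
    · push_cast
      calc (3 * d + 8) * (n : ℝ) ^ 10 ≤ n * n ^ 10 := by gcongr; linarith
        _ = (n : ℝ) ^ 11 := by ring

/-- The values of a noncyclotomic integer polynomial at `k`-th roots of unity are not
exponentially small in `k`. -/
theorem eventually_exp_neg_mul_le_norm_aeval {f : ℤ[X]} (h0 : f.coeff 0 ≠ 0)
    (hnc : Noncyclotomic f) {ε : ℝ} (hε : 0 < ε) :
    ∀ᶠ k : ℕ in atTop, ∀ ζ : ℂ, ζ ^ k = 1 → Real.exp (-ε * k) ≤ ‖aeval ζ f‖ := by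
  have hf : f ≠ 0 := by
    rintro rfl
    simp at h0
  set m := (f.aroots ℂ).card with hmdef
  have hε' : 0 < ε / (m + 1) := by positivity
  have hroots : ∀ᶠ k : ℕ in atTop, ∀ θ ∈ (f.aroots ℂ).toFinset, ∀ ζ : ℂ, ζ ^ k = 1 →
      Real.exp (-(ε / (m + 1)) * k) ≤ ‖θ - ζ‖ := by
    rw [Filter.eventually_all_finset]
    intro θ hθ
    have hr : aeval θ f = 0 := (mem_aroots.mp (Multiset.mem_toFinset.mp hθ)).2
    refine eventually_exp_neg_mul_le_norm_sub ⟨f, hf, hr⟩ ?_ (hnc θ hr) hε'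
    rintro rfl
    rw [← eval_map_algebraMap, ← coeff_zero_eq_eval_zero, coeff_map] at hr
    exact h0 (by simpa using hr)
  filter_upwards [hroots] with k hk ζ hζ
  rw [← eval_map_algebraMap, (IsAlgClosed.splits (f.map (algebraMap ℤ ℂ))).eval_eq_prod_roots,
    norm_mul]
  have hlead : 1 ≤ ‖(f.map (algebraMap ℤ ℂ)).leadingCoeff‖ := by
    rw [leadingCoeff_map_of_injective (algebraMap ℤ ℂ).injective_int, eq_intCast,
      Complex.norm_intCast]
    exact_mod_cast Int.one_le_abs (leadingCoeff_ne_zero.mpr hf)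
  have hprod : Real.exp (-(ε / (m + 1)) * k) ^ m ≤
      ‖((f.aroots ℂ).map fun a => ζ - a).prod‖ := by
    rw [hmdef, ← Multiset.prod_replicate, ← Multiset.map_const', ← normHom_apply,
      map_multiset_prod, Multiset.map_map]
    refine Multiset.prod_map_le_prod_map₀ _ _ (fun _ _ => (Real.exp_pos _).le) fun θ hθ => ?_
    simp only [Function.comp_apply, normHom_apply]
    rw [norm_sub_rev]
    exact hk θ (Multiset.mem_toFinset.mpr hθ) ζ hζ
  calc Real.exp (-ε * k) ≤ Real.exp (-(ε / (m + 1)) * k) ^ m := by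
        rw [← Real.exp_nat_mul]
        refine Real.exp_le_exp.mpr ?_
        have h1 : ε / (m + 1) * m ≤ ε := by
          rw [div_mul_eq_mul_div, div_le_iff₀ (by positivity)]
          nlinarith
        nlinarith [mul_le_mul_of_nonneg_right h1 (Nat.cast_nonneg (α := ℝ) k)]
    _ ≤ _ := hprod
    _ ≤ _ := le_mul_of_one_le_left (norm_nonneg _) hlead

/-- The operator `f(σ)` on real functions of period `k`. -/
def cyclicOp (f : ℤ[X]) (k : ℕ) : (ZMod k → ℝ) →ₗ[ℝ] (ZMod k → ℝ) where
  toFun z j := ∑ i ∈ Finset.range (f.natDegree + 1), (f.coeff i : ℝ) * z (j + i)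
  map_add' z w := by
    ext j
    simp [mul_add, Finset.sum_add_distrib]
  map_smul' r z := by
    ext j
    simp only [Pi.smul_apply, smul_eq_mul, RingHom.id_apply, Finset.mul_sum]
    exact Finset.sum_congr rfl fun i _ => by ring

theorem cyclicOp_apply (f : ℤ[X]) (k : ℕ) (z : ZMod k → ℝ) (j : ZMod k) :
    cyclicOp f k z j = ∑ i ∈ Finset.range (f.natDegree + 1), (f.coeff i : ℝ) * z (j + i) := rfl

theorem dft_cyclicOp (f : ℤ[X]) (k : ℕ) [NeZero k] (z : ZMod k → ℝ) (t : ZMod k) :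
    ZMod.dft (fun j => (cyclicOp f k z j : ℂ)) t =
      aeval (ZMod.stdAddChar t) f * ZMod.dft (fun j => (z j : ℂ)) t := by
  simp only [ZMod.dft_apply, cyclicOp_apply, smul_eq_mul, Complex.ofReal_sum, Complex.ofReal_mul,
    Complex.ofReal_intCast]
  simp_rw [Finset.mul_sum (Finset.range _)]
  rw [Finset.sum_comm, aeval_eq_sum_range, Finset.sum_mul]
  refine Finset.sum_congr rfl fun i _ => ?_
  rw [Finset.mul_sum, ← Equiv.sum_comp (Equiv.addRight (i : ZMod k)) fun j =>
    f.coeff i • (ZMod.stdAddChar t : ℂ) ^ i * (ZMod.stdAddChar (-(j * t)) * (z j : ℂ))]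
  refine Finset.sum_congr rfl fun j _ => ?_
  have : (ZMod.stdAddChar (-(j * t)) : ℂ) =
      ZMod.stdAddChar t ^ i * ZMod.stdAddChar (-((j + (i : ZMod k)) * t)) := by
    rw [← AddChar.map_nsmul_eq_pow, ← AddChar.map_add_eq_mul]
    congr 1
    rw [nsmul_eq_mul]
    ring
  rw [this, Equiv.coe_addRight, zsmul_eq_mul]
  ring

/-- The inverse of `f(σ)` on functions of period `k` is bounded in terms of the values of `f` at
`k`-th roots of unity. -/
theorem abs_le_of_abs_cyclicOp_le {f : ℤ[X]} {k : ℕ} [NeZero k] {c : ℝ} (hc : 0 < c)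
    (hf : ∀ ζ : ℂ, ζ ^ k = 1 → c ≤ ‖aeval ζ f‖) {z : ZMod k → ℝ} {b : ℝ}
    (hz : ∀ j, |cyclicOp f k z j| ≤ b) (j : ZMod k) : |z j| ≤ k * b / c := by
  have hk : (0 : ℝ) < k := by exact_mod_cast (NeZero.pos k)
  have hnorm (t : ZMod k) : ‖(ZMod.stdAddChar t : ℂ)‖ = 1 := by
    rw [ZMod.stdAddChar_apply]
    exact Circle.norm_coe _
  have hdft (t : ZMod k) : ‖ZMod.dft (fun j => (z j : ℂ)) t‖ ≤ k * b / c := by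
    rw [le_div_iff₀ hc]
    have hζ : (ZMod.stdAddChar t : ℂ) ^ k = 1 := by
      rw [← AddChar.map_nsmul_eq_pow, nsmul_eq_mul, CharP.cast_eq_zero, zero_mul,
        AddChar.map_zero_eq_one]
    calc _ ≤ ‖ZMod.dft (fun j => (z j : ℂ)) t‖ * ‖aeval (ZMod.stdAddChar t : ℂ) f‖ := by
          gcongr
          exact hf _ hζ
      _ = ‖ZMod.dft (fun j => (cyclicOp f k z j : ℂ)) t‖ := by
          rw [dft_cyclicOp, norm_mul, mul_comm]
      _ ≤ ∑ j : ZMod k, b := by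
          rw [ZMod.dft_apply]
          refine norm_sum_le_of_le _ fun j _ => ?_
          rw [norm_smul, hnorm, one_mul, Complex.norm_real]
          exact hz j
      _ = k * b := by simp [ZMod.card]
  have hinv : (z j : ℂ) = (k : ℂ)⁻¹ • ∑ t : ZMod k,
      (ZMod.stdAddChar (t * j) : ℂ) • ZMod.dft (fun j => (z j : ℂ)) t := by
    rw [← ZMod.invDFT_apply, LinearEquiv.symm_apply_apply]
  rw [← Real.norm_eq_abs, ← Complex.norm_real, hinv, norm_smul, norm_inv, Complex.norm_natCast,
    inv_mul_le_iff₀ hk]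
  calc _ ≤ ∑ t : ZMod k, (k * b / c) := by
        refine norm_sum_le_of_le _ fun t _ => ?_
        rw [norm_smul, hnorm, one_mul]
        exact hdft t
    _ = _ := by simp [ZMod.card]

theorem cyclicOp_injective {f : ℤ[X]} (hnc : Noncyclotomic f) (k : ℕ) [NeZero k] :
    Function.Injective (cyclicOp f k) := by
  obtain ⟨c, hc, hf⟩ : ∃ c : ℝ, 0 < c ∧ ∀ ζ : ℂ, ζ ^ k = 1 → c ≤ ‖aeval ζ f‖ := by
    have hfin : {ζ : ℂ | ζ ^ k = 1}.Finite := by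
      refine (nthRootsFinset k (1 : ℂ)).finite_toSet.subset fun ζ hζ => ?_
      exact (mem_nthRootsFinset (NeZero.pos k) _).mpr hζ
    obtain ⟨ζ₀, hζ₀, hmin⟩ := hfin.exists_minimalFor (fun ζ => ‖aeval ζ f‖) _ ⟨1, one_pow k⟩
    refine ⟨‖aeval ζ₀ f‖, norm_pos_iff.mpr fun h => hnc ζ₀ h k (NeZero.pos k) hζ₀, fun ζ hζ => ?_⟩
    by_contra! h
    exact absurd (hmin hζ h.le) (not_le.mpr h)
  rw [injective_iff_map_eq_zero]
  intro z hz
  ext j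
  have := abs_le_of_abs_cyclicOp_le hc hf (z := z) (b := 0) (fun j => by simp [hz]) j
  simpa using this

theorem cyclicOp_surjective {f : ℤ[X]} (hnc : Noncyclotomic f) (k : ℕ) [NeZero k] :
    Function.Surjective (cyclicOp f k) :=
  LinearMap.injective_iff_surjective.mp (cyclicOp_injective hnc k)

theorem torus_coe_eq_zero_iff {r : ℝ} : (r : Torus) = 0 ↔ ∃ a : ℤ, (a : ℝ) = r := by
  rw [AddCircle.coe_eq_zero_iff]
  simp

theorem exists_torus_coe_eq_abs_eq_norm (t : Torus) : ∃ r : ℝ, (r : Torus) = t ∧ |r| = ‖t‖ := by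
  induction t using QuotientAddGroup.induction_on with
  | H r =>
    refine ⟨r - round r, ?_, (UnitAddCircle.norm_eq (x := r)).symm⟩
    rw [AddCircle.coe_sub, sub_eq_self]
    exact torus_coe_eq_zero_iff.mpr ⟨round r, rfl⟩

theorem norm_torus_coe_le (r : ℝ) : ‖(r : Torus)‖ ≤ |r| := by
  rw [UnitAddCircle.norm_eq]
  simpa using round_le r 0

/-- The point of `𝕋^ℤ` of period `k` given by a real function on `ℤ/kℤ`. -/
def periodicPoint (k : ℕ) (z : ZMod k → ℝ) : ℤ → Torus := fun n => (z (n : ZMod k) : Torus)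

theorem fsT_periodicPoint (f : ℤ[X]) (k : ℕ) (z : ZMod k → ℝ) (n : ℤ) :
    fsT f (periodicPoint k z) n = ((cyclicOp f k z (n : ZMod k) : ℝ) : Torus) := by
  simp only [fsT, periodicPoint, cyclicOp_apply]
  rw [← QuotientAddGroup.mk'_apply, map_sum]
  refine Finset.sum_congr rfl fun i _ => ?_
  rw [QuotientAddGroup.mk'_apply, ← zsmul_eq_mul]
  push_cast
  rfl

theorem periodicPoint_mem_Xf_iff {f : ℤ[X]} {k : ℕ} {z : ZMod k → ℝ} :
    periodicPoint k z ∈ Xf f ↔ ∀ j, ∃ a : ℤ, (a : ℝ) = cyclicOp f k z j := by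
  simp only [Xf, Set.mem_ofPred_eq, fsT_periodicPoint, torus_coe_eq_zero_iff]
  refine ⟨fun h j => ?_, fun h n => h _⟩
  obtain ⟨n, rfl⟩ := ZMod.intCast_surjective j
  exact h n

theorem periodicPoint_mem_Pk {f : ℤ[X]} {k : ℕ} {z : ZMod k → ℝ}
    (h : ∀ j, ∃ a : ℤ, (a : ℝ) = cyclicOp f k z j) : periodicPoint k z ∈ Pk f k :=
  ⟨periodicPoint_mem_Xf_iff.mpr h, fun n => by simp [periodicPoint]⟩

theorem exists_periodicPoint_eq {k : ℕ} [NeZero k] {x : ℤ → Torus}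
    (hx : ∀ n : ℤ, x (n + (k : ℤ)) = x n) (s : Torus → ℝ) (hs : ∀ t, (s t : Torus) = t) :
    periodicPoint k (fun j => s (x j.val)) = x := by
  ext n
  simp only [periodicPoint, hs]
  rw [ZMod.val_intCast, Int.emod_def]
  have hp : Function.Periodic x (k : ℤ) := hx
  have := hp.sub_zsmul_eq (x := n) (n / k)
  rwa [smul_eq_mul, mul_comm] at this

theorem abs_cyclicOp_le (f : ℤ[X]) {k : ℕ} {z : ZMod k → ℝ} {b : ℝ} (hz : ∀ j, |z j| ≤ b)
    (j : ZMod k) :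
    |cyclicOp f k z j| ≤ (∑ i ∈ Finset.range (f.natDegree + 1), |(f.coeff i : ℝ)|) * b := by
  rw [cyclicOp_apply, Finset.sum_mul]
  refine (Finset.abs_sum_le_sum_abs _ _).trans (Finset.sum_le_sum fun i _ => ?_)
  rw [abs_mul]
  gcongr
  exact hz _

theorem finite_Pk {f : ℤ[X]} (hnc : Noncyclotomic f) {k : ℕ} (hk : 0 < k) : (Pk f k).Finite := by
  have : NeZero k := ⟨hk.ne'⟩
  choose s hs using exists_torus_coe_eq_abs_eq_norm
  set F := ∑ i ∈ Finset.range (f.natDegree + 1), |(f.coeff i : ℝ)|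
  have hV : {v : ZMod k → ℤ | ∀ j, v j ∈ Set.Icc (-⌈F⌉) ⌈F⌉}.Finite :=
    Set.Finite.pi' fun _ => Set.finite_Icc _ _
  refine (hV.image fun v => periodicPoint k
    (Function.surjInv (cyclicOp_surjective hnc k) fun j => (v j : ℝ))).subset fun x hx => ?_
  have hxz := exists_periodicPoint_eq hx.2 s fun t => (hs t).1
  set z : ZMod k → ℝ := fun j => s (x j.val) with hz
  have hint := hx.1
  rw [← hxz, periodicPoint_mem_Xf_iff] at hint
  choose v hv using hint
  refine ⟨v, fun j => ?_, ?_⟩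
  · have hb := abs_cyclicOp_le f (z := z) (b := 1) (fun j => by
      rw [hz, (hs _).2]
      refine (AddCircle.norm_le_half_period (p := (1 : ℝ)) one_ne_zero).trans ?_
      norm_num) j
    rw [← hv j, mul_one] at hb
    have h2 : |v j| ≤ ⌈F⌉ := by
      have : ((|v j| : ℤ) : ℝ) ≤ (⌈F⌉ : ℝ) := by
        push_cast
        exact hb.trans (Int.le_ceil F)
      exact_mod_cast this
    exact abs_le.mp h2
  · simp only
    rw [← hxz]
    congr 1
    refine cyclicOp_injective hnc k ?_
    exact (Function.surjInv_eq (cyclicOp_surjective hnc k) _).trans (funext hv)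

/-- Distinct points of period `k` are uniformly separated along their orbits. -/
theorem eq_of_mem_Pk_of_dist_lt {f : ℤ[X]} (hnc : Noncyclotomic f) {k : ℕ} (hk : 0 < k) {δ : ℝ}
    (hδ : (∑ i ∈ Finset.range (f.natDegree + 1), |(f.coeff i : ℝ)|) * δ < 1)
    {x y : ℤ → Torus} (hx : x ∈ Pk f k) (hy : y ∈ Pk f k)
    (hxy : ∀ n : ℕ, n < k → dist (x n) (y n) ≤ δ) : x = y := by
  have : NeZero k := ⟨hk.ne'⟩
  choose s hs using exists_torus_coe_eq_abs_eq_norm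
  have hper : ∀ n : ℤ, (x - y) (n + (k : ℤ)) = (x - y) n := fun n => by
    rw [Pi.sub_apply, Pi.sub_apply, hx.2, hy.2]
  have hxz := exists_periodicPoint_eq hper s fun t => (hs t).1
  set z : ZMod k → ℝ := fun j => s ((x - y) j.val) with hz
  have hmem : x - y ∈ Xf f := fun n => by
    have h1 : fsT f x n = 0 := hx.1 n
    have h2 : fsT f y n = 0 := hy.1 n
    simp only [fsT] at h1 h2 ⊢
    simp only [Pi.sub_apply, smul_sub, Finset.sum_sub_distrib, h1, h2, sub_zero]
  rw [← hxz, periodicPoint_mem_Xf_iff] at hmem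
  have hzero : cyclicOp f k z = 0 := by
    ext j
    obtain ⟨a, ha⟩ := hmem j
    have hb := abs_cyclicOp_le f (z := z) (b := δ) (fun j => by
      rw [hz, (hs _).2, Pi.sub_apply, ← dist_eq_norm]
      exact hxy _ (ZMod.val_lt j)) j
    have h2 : |a| < 1 := by
      have : ((|a| : ℤ) : ℝ) < 1 := by
        push_cast
        rw [ha]
        exact hb.trans_lt hδ
      exact_mod_cast this
    rw [← ha, Int.abs_lt_one_iff.mp h2]
    simp
  have hz0 : z = 0 := cyclicOp_injective hnc k (by rw [hzero, map_zero])
  rw [← sub_eq_zero, ← hxz, hz0]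
  ext n
  simp [periodicPoint]

/-- A point of `X_f` is determined on a window of length `k`, up to a small error, by a point of
period `k` together with a bounded amount of information. -/
theorem exists_code_of_Xf {f : ℤ[X]} (hnc : Noncyclotomic f) {k : ℕ} (hk : 0 < k)
    {c : ℝ} (hc : 0 < c) (hf : ∀ ζ : ℂ, ζ ^ k = 1 → c ≤ ‖aeval ζ f‖) {q : ℕ} (hq : 0 < q)
    (p : ℤ) : ∃ κ : (ℤ → Torus) → Pk f k × (Fin f.natDegree → Fin q),
      ∀ x ∈ Xf f, ∀ y ∈ Xf f, κ x = κ y →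
        ∀ n : ℕ, n < k → dist (x (n - p)) (y (n - p)) ≤ k / (q * c) := by
  have : NeZero k := ⟨hk.ne'⟩
  have hqR : (0 : ℝ) < q := by exact_mod_cast hq
  choose s hs using exists_torus_coe_eq_abs_eq_norm
  let z : (ℤ → Torus) → ZMod k → ℝ := fun x j => s (x (j.val - p))
  let v : (ℤ → Torus) → ZMod k → ℝ := fun x => cyclicOp f k (z x)
  have hw : ∀ x, ∃ w, cyclicOp f k w = fun j => (⌊v x j⌋ : ℝ) :=
    fun x => cyclicOp_surjective hnc k _
  choose w hw using hw
  refine ⟨fun x => ⟨⟨periodicPoint k (w x), periodicPoint_mem_Pk fun j => ⟨⌊v x j⌋, by rw [hw]⟩⟩,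
    fun i => ⟨⌊q * Int.fract (v x ((-(i + 1 : ℕ) : ℤ) : ZMod k))⌋₊, ?_⟩⟩, ?_⟩
  · rw [Nat.floor_lt (mul_nonneg hqR.le (Int.fract_nonneg _))]
    exact mul_lt_of_lt_one_right hqR (Int.fract_lt_one _)
  have hint : ∀ x ∈ Xf f, ∀ j : ZMod k, j.val + f.natDegree < k → Int.fract (v x j) = 0 := by
    intro x hx j hj
    rw [Int.fract_eq_zero_iff]
    have h1 : ((v x j : ℝ) : Torus) = fsT f x (j.val - p) := by
      simp only [v, cyclicOp_apply, fsT]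
      rw [← QuotientAddGroup.mk'_apply, map_sum]
      refine Finset.sum_congr rfl fun i hi => ?_
      rw [Finset.mem_range] at hi
      have hval : (j + (i : ZMod k)).val = j.val + i := by
        rw [ZMod.val_add, ZMod.val_natCast, Nat.add_mod_mod, Nat.mod_eq_of_lt (by omega)]
      rw [QuotientAddGroup.mk'_apply, ← zsmul_eq_mul]
      have h2 : ((s (x ((j.val : ℤ) - p + i)) : ℝ) : Torus) = x ((j.val : ℤ) - p + i) := (hs _).1
      conv_rhs => rw [← h2]
      simp only [z, hval]
      push_cast
      rw [show (j.val : ℤ) + i - p = j.val - p + i by ring]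
      rfl
    rw [hx, torus_coe_eq_zero_iff] at h1
    obtain ⟨a, ha⟩ := h1
    exact ⟨a, ha⟩
  intro x hx y hy hxy n hn
  rw [Prod.mk.injEq] at hxy
  obtain ⟨hxy1, hxy2⟩ := hxy
  have hper : periodicPoint k (w x) = periodicPoint k (w y) := congrArg Subtype.val hxy1
  have hfract (j : ZMod k) : |Int.fract (v x j) - Int.fract (v y j)| ≤ 1 / q := by
    by_cases hj : j.val + f.natDegree < k
    · rw [hint x hx j hj, hint y hy j hj, sub_zero, abs_zero]
      positivity
    · have hlt := ZMod.val_lt j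
      have hi : k - 1 - j.val < f.natDegree := by omega
      have hj' : ((-((k - 1 - j.val : ℕ) + 1 : ℕ) : ℤ) : ZMod k) = j := by
        have h1 : (k - 1 - j.val : ℕ) + 1 + j.val = k := by omega
        have h2 : (((k - 1 - j.val : ℕ) + 1 + j.val : ℕ) : ZMod k) = 0 := by
          rw [h1]; exact ZMod.natCast_self k
        rw [Nat.cast_add, ZMod.natCast_zmod_val] at h2
        rw [Int.cast_neg, Int.cast_natCast]
        exact neg_eq_of_add_eq_zero_right h2
      have hfl := congrArg Fin.val (congrFun hxy2 ⟨k - 1 - j.val, hi⟩)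
      simp only at hfl
      rw [hj'] at hfl
      have hx1 := Nat.floor_le (mul_nonneg hqR.le (Int.fract_nonneg (v x j)))
      have hx2 := Nat.lt_floor_add_one (q * Int.fract (v x j))
      have hy1 := Nat.floor_le (mul_nonneg hqR.le (Int.fract_nonneg (v y j)))
      have hy2 := Nat.lt_floor_add_one (q * Int.fract (v y j))
      rw [hfl] at hx1 hx2
      have habs : |q * Int.fract (v x j) - q * Int.fract (v y j)| ≤ 1 :=
        abs_le.mpr ⟨by linarith, by linarith⟩
      rwa [← mul_sub, abs_mul, abs_of_pos hqR, mul_comm, ← le_div_iff₀ hqR] at habs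
  have hbound := abs_le_of_abs_cyclicOp_le hc hf (z := (z x - w x) - (z y - w y)) (b := 1 / q)
    (fun j => by
      simp only [map_sub, Pi.sub_apply, hw]
      exact hfract j) (n : ZMod k)
  have hval : ((n : ZMod k)).val = n := by rw [ZMod.val_natCast, Nat.mod_eq_of_lt hn]
  have heq : x (n - p) - y (n - p) = ((((z x - w x) - (z y - w y)) (n : ZMod k) : ℝ) : Torus) := by
    have h1 : ((w x (n : ZMod k) : ℝ) : Torus) = w y (n : ZMod k) := by
      simpa [periodicPoint] using congrFun hper (n : ℤ)
    simp only [Pi.sub_apply, AddCircle.coe_sub, h1, z, hval, (hs _).1]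
    abel
  rw [dist_eq_norm, heq]
  refine (norm_torus_coe_le _).trans (hbound.trans_eq ?_)
  field_simp

open Uniformity Dynamics

theorem shiftT_iterate_apply (i : ℕ) (x : ℤ → Torus) (n : ℤ) : shiftT^[i] x n = x (n + i) := by
  induction i generalizing x with
  | zero => simp
  | succ i ih =>
    rw [Function.iterate_succ_apply, ih, shiftT]
    push_cast
    rw [add_assoc]

theorem mapsTo_shiftT_Xf (f : ℤ[X]) : Set.MapsTo shiftT (Xf f) (Xf f) := by
  intro x hx n
  rw [← hx (n + 1)]
  simp only [fsT, shiftT]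
  exact Finset.sum_congr rfl fun i _ => by rw [add_right_comm]

theorem one_le_card_Pk {f : ℤ[X]} (hnc : Noncyclotomic f) {k : ℕ} (hk : 0 < k) :
    1 ≤ Nat.card (Pk f k) := by
  have : Finite (Pk f k) := finite_Pk hnc hk
  have : Nonempty (Pk f k) := ⟨0, fun n => by simp [fsT], fun n => rfl⟩
  exact Nat.card_pos

theorem ENNReal.log_natCast_div_natCast {a k : ℕ} (ha : 1 ≤ a) :
    ENNReal.log a / k = ((Real.log a / k : ℝ) : EReal) := by
  have ha' : (0 : ℝ) < a := by exact_mod_cast ha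
  rw [EReal.coe_div, ← ENNReal.ofReal_natCast, ENNReal.log_ofReal_of_pos ha']
  rfl

theorem limsup_log_card_Pk_le_coverEntropy {f : ℤ[X]} (hnc : Noncyclotomic f) :
    limsup (fun k : ℕ => ((Real.log (Nat.card (Pk f k)) / (k : ℝ) : ℝ) : EReal)) atTop ≤
      coverEntropy shiftT (Xf f) := by
  set F := ∑ i ∈ Finset.range (f.natDegree + 1), |(f.coeff i : ℝ)|
  have hF : 0 ≤ F := Finset.sum_nonneg fun _ _ => abs_nonneg _
  obtain ⟨δ, hδ, hFδ⟩ : ∃ δ : ℝ, 0 < δ ∧ F * (δ + δ) < 1 := by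
    refine ⟨1 / (2 * (F + 1)), by positivity, ?_⟩
    rw [← two_mul, ← mul_assoc, mul_one_div, div_lt_one (by positivity)]
    linarith
  let U : SetRel (ℤ → Torus) (ℤ → Torus) := {xy | dist (xy.1 0) (xy.2 0) < δ}
  have hU : U ∈ 𝓤 (ℤ → Torus) :=
    (Pi.uniformContinuous_proj (fun _ : ℤ => Torus) 0) (Metric.dist_mem_uniformity hδ)
  refine le_trans ?_ (netEntropyEntourage_le_coverEntropy (T := shiftT) (F := Xf f) hU)
  refine limsup_le_limsup ?_
  filter_upwards [eventually_gt_atTop 0] with k hk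
  have hfin := finite_Pk hnc hk
  rw [← ENNReal.log_natCast_div_natCast (one_le_card_Pk hnc hk)]
  refine EReal.monotone_div_right_of_nonneg k.cast_nonneg' (ENNReal.log_monotone ?_)
  have hnet : IsDynNetIn shiftT (Xf f) U k (hfin.toFinset : Set (ℤ → Torus)) := by
    rw [hfin.coe_toFinset]
    refine ⟨fun x hx => hx.1, fun x hx y hy hxy => Set.disjoint_left.mpr fun w hxw hyw => hxy ?_⟩
    rw [mem_ball_dynEntourage] at hxw hyw
    refine eq_of_mem_Pk_of_dist_lt hnc hk hFδ hx hy fun n hn => ?_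
    have h1 : dist (x n) (w n) < δ := by
      simpa [U, UniformSpace.ball, shiftT_iterate_apply] using hxw n hn
    have h2 : dist (y n) (w n) < δ := by
      simpa [U, UniformSpace.ball, shiftT_iterate_apply] using hyw n hn
    exact (dist_triangle_right _ _ (w n)).trans (add_le_add h1.le h2.le)
  have hcard := hnet.card_le_netMaxcard
  rw [← Set.ncard_eq_toFinset_card _ hfin, ← Nat.card_coe_set_eq] at hcard
  exact_mod_cast ENat.toENNReal_mono hcard

/-- An entourage of `𝕋^ℤ` only constrains finitely many coordinates, up to a positive error. -/
theorem exists_window_of_mem_uniformity {U : SetRel (ℤ → Torus) (ℤ → Torus)}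
    (hU : U ∈ 𝓤 (ℤ → Torus)) : ∃ p : ℕ, ∃ δ > 0, ∀ x y : ℤ → Torus,
      (∀ j : ℤ, |j| ≤ p → dist (x j) (y j) < δ) → (x, y) ∈ U := by
  rw [Pi.uniformity, mem_iInf] at hU
  obtain ⟨I, hI, V, hV, rfl⟩ := hU
  have hV' : ∀ i : I, ∃ δ > 0, ∀ x y : ℤ → Torus, dist (x i) (y i) < δ → (x, y) ∈ V i := by
    intro i
    obtain ⟨W, hW, hWV⟩ := mem_comap.mp (hV i)
    obtain ⟨δ, hδ, hδW⟩ := Metric.mem_uniformity_dist.mp hW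
    exact ⟨δ, hδ, fun x y hxy => hWV (hδW hxy)⟩
  choose δ hδ hδV using hV'
  have := hI.to_subtype
  obtain ⟨δ₀, h1, h2⟩ : ∃ δ₀ : ℝ, (∀ i : I, δ₀ < δ i) ∧ 0 < δ₀ :=
    ((eventually_all.mpr fun i : I => eventually_nhdsWithin_of_eventually_nhds
      (eventually_lt_nhds (hδ i))).and (self_mem_nhdsWithin (a := (0 : ℝ)) (s := Set.Ioi 0))).exists
  obtain ⟨p, hp⟩ := (hI.image Int.natAbs).bddAbove
  refine ⟨p, δ₀, h2, fun x y hxy => Set.mem_iInter.mpr fun i => hδV i x y ?_⟩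
  refine (hxy i ?_).trans (h1 i)
  have := hp ⟨i, i.2, rfl⟩
  rw [Int.abs_eq_natAbs]
  exact_mod_cast this

theorem exists_isDynCoverOf_card_le {f : ℤ[X]} (hnc : Noncyclotomic f) {k : ℕ} (hk : 0 < k)
    {c : ℝ} (hc : 0 < c) (hf : ∀ ζ : ℂ, ζ ^ k = 1 → c ≤ ‖aeval ζ f‖) {q : ℕ} (hq : 0 < q)
    {U : SetRel (ℤ → Torus) (ℤ → Torus)} {p : ℕ} {δ : ℝ} (hδ : k / (q * c) < δ)
    (hU : ∀ x y : ℤ → Torus, (∀ j : ℤ, |j| ≤ p → dist (x j) (y j) < δ) → (x, y) ∈ U) :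
    ∃ s : Finset (ℤ → Torus), IsDynCoverOf shiftT (Xf f) U (k - 2 * p) (s : Set (ℤ → Torus)) ∧
      s.card ≤ Nat.card (Pk f k) * q ^ f.natDegree := by
  classical
  obtain ⟨κ, hκ⟩ := exists_code_of_Xf hnc hk hc hf hq p
  have := (finite_Pk hnc hk).fintype
  let g : Pk f k × (Fin f.natDegree → Fin q) → ℤ → Torus :=
    fun a => if h : ∃ x ∈ Xf f, κ x = a then h.choose else 0
  refine ⟨Finset.univ.image g, fun x hx => ?_, ?_⟩
  · have hex : ∃ y ∈ Xf f, κ y = κ x := ⟨x, hx, rfl⟩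
    refine ⟨g (κ x), by simp, ?_⟩
    have hg : g (κ x) = hex.choose := dif_pos hex
    rw [hg]
    refine mem_dynEntourage.mpr fun i hi => hU _ _ fun j hj => ?_
    rw [shiftT_iterate_apply, shiftT_iterate_apply]
    rw [abs_le] at hj
    obtain ⟨n, hn⟩ := Int.eq_ofNat_of_zero_le (show 0 ≤ j + i + p by omega)
    rw [show j + i = n - p by omega]
    exact (hκ x hx _ hex.choose_spec.1 hex.choose_spec.2.symm n (by omega)).trans_lt hδ
  · refine Finset.card_image_le.trans ?_
    simp [Nat.card_eq_fintype_card]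

theorem eventually_log_covering_le {f : ℤ[X]} (h0 : f.coeff 0 ≠ 0) (hnc : Noncyclotomic f)
    {U : SetRel (ℤ → Torus) (ℤ → Torus)} (hU : U ∈ 𝓤 (ℤ → Torus)) {ε : ℝ} (hε : 0 < ε) :
    ∃ p : ℕ, ∀ᶠ k : ℕ in atTop, ∃ s : Finset (ℤ → Torus), s.Nonempty ∧
      IsDynCoverOf shiftT (Xf f) U (k - 2 * p) (s : Set (ℤ → Torus)) ∧
      Real.log s.card ≤ Real.log (Nat.card (Pk f k)) + f.natDegree * (3 * ε * k) := by
  obtain ⟨p, δ, hδ, hUδ⟩ := exists_window_of_mem_uniformity hU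
  have hlim : Tendsto (fun k : ℕ => (k : ℝ) * Real.exp (-ε * k)) atTop (𝓝 0) := by
    have := (tendsto_rpow_mul_exp_neg_mul_atTop_nhds_zero 1 ε hε).comp tendsto_natCast_atTop_atTop
    simpa [Function.comp_def] using this
  have hexp : ∀ᶠ k : ℕ in atTop, 2 ≤ Real.exp (ε * k) :=
    (Real.tendsto_exp_atTop.comp
      (tendsto_natCast_atTop_atTop.const_mul_atTop hε)).eventually_ge_atTop 2
  refine ⟨p, ?_⟩
  filter_upwards [eventually_exp_neg_mul_le_norm_aeval h0 hnc hε, hlim.eventually_lt_const hδ,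
    hexp, eventually_gt_atTop 0] with k hf hkδ h2 hk
  set q := ⌈Real.exp (2 * ε * k)⌉₊
  have hq : 0 < q := Nat.ceil_pos.mpr (Real.exp_pos _)
  have hqR : (0 : ℝ) < q := by exact_mod_cast hq
  have hqle : Real.exp (2 * ε * k) ≤ q := Nat.le_ceil _
  have hqlog : Real.log q ≤ 3 * ε * k := by
    rw [Real.log_le_iff_le_exp hqR]
    have h1 : (q : ℝ) < Real.exp (2 * ε * k) + 1 := Nat.ceil_lt_add_one (Real.exp_pos _).le
    have h3 : 1 ≤ Real.exp (2 * ε * k) := Real.one_le_exp (by positivity)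
    rw [show 3 * ε * k = ε * k + 2 * ε * k by ring, Real.exp_add]
    nlinarith
  have hsmall : k / (q * Real.exp (-ε * k)) < δ := by
    refine lt_of_le_of_lt ?_ hkδ
    rw [div_le_iff₀ (by positivity)]
    have h1 : Real.exp (-ε * k) * (Real.exp (2 * ε * k) * Real.exp (-ε * k)) = 1 := by
      rw [← Real.exp_add, ← Real.exp_add, Real.exp_eq_one_iff]
      ring
    calc (k : ℝ) = k * (Real.exp (-ε * k) * (Real.exp (2 * ε * k) * Real.exp (-ε * k))) := by
          rw [h1, mul_one]
      _ ≤ k * (Real.exp (-ε * k) * (q * Real.exp (-ε * k))) := by gcongr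
      _ = _ := by ring
  obtain ⟨s, hs, hcard⟩ := exists_isDynCoverOf_card_le hnc hk (Real.exp_pos _) hf hq hsmall hUδ
  have hsne : s.Nonempty := by
    have h0mem : (0 : ℤ → Torus) ∈ Xf f := fun n => by simp [fsT]
    exact_mod_cast hs.nonempty ⟨0, h0mem⟩
  refine ⟨s, hsne, hs, ?_⟩
  have hscard : (0 : ℝ) < s.card := by exact_mod_cast hsne.card_pos
  have hP : (0 : ℝ) < Nat.card (Pk f k) := by exact_mod_cast one_le_card_Pk hnc hk
  calc Real.log s.card ≤ Real.log (Nat.card (Pk f k) * q ^ f.natDegree) :=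
        Real.log_le_log hscard (by exact_mod_cast hcard)
    _ = Real.log (Nat.card (Pk f k)) + f.natDegree * Real.log q := by
        rw [Real.log_mul hP.ne' (by positivity), Real.log_pow]
    _ ≤ _ := by gcongr

theorem coverEntropy_le_of_frequently {f : ℤ[X]} (h0 : f.coeff 0 ≠ 0) (hnc : Noncyclotomic f)
    {b : ℝ} (hb : ∃ᶠ k : ℕ in atTop, Real.log (Nat.card (Pk f k)) / (k : ℝ) < b) :
    coverEntropy shiftT (Xf f) ≤ b := by
  refine iSup₂_le fun U hU => ?_
  obtain ⟨V, hV, hVsymm, hVU⟩ := comp_symm_mem_uniformity_sets hU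
  refine (coverEntropyEntourage_antitone _ _ hVU).trans ?_
  have key : ∀ ε : ℝ, 0 < ε → coverEntropyEntourage shiftT (Xf f) (SetRel.comp V V) ≤
      ((b + f.natDegree * (3 * ε) : ℝ) : EReal) := by
    intro ε hε
    obtain ⟨p, hp⟩ := eventually_log_covering_le h0 hnc hV hε
    have hlim : Tendsto (fun k : ℕ => (((b + f.natDegree * (3 * ε)) *
        ((k : ℝ) / (k - 2 * p)) : ℝ) : EReal)) atTop
        (𝓝 ((b + f.natDegree * (3 * ε) : ℝ) : EReal)) := by
      have h1 : Tendsto (fun k : ℕ => (k : ℝ) / (k + (-(2 * p)))) atTop (𝓝 1) :=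
        tendsto_natCast_div_add_atTop _
      have h2 := h1.const_mul (b + f.natDegree * (3 * ε))
      rw [mul_one] at h2
      exact (continuous_coe_real_ereal.tendsto _).comp (by simpa [sub_eq_add_neg] using h2)
    refine ge_of_tendsto_of_frequently hlim ?_
    refine (hb.and_eventually (hp.and (eventually_gt_atTop (2 * p)))).mono ?_
    rintro k ⟨hkb, ⟨s, hsne, hs, hlog⟩, hkp⟩
    have hk : (0 : ℝ) < k := by exact_mod_cast (show 0 < k by omega)
    have hkp' : (0 : ℝ) < k - 2 * p := by
      have : ((2 * p : ℕ) : ℝ) < k := by exact_mod_cast hkp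
      push_cast at this
      linarith
    refine (hs.coverEntropyEntourage_le_log_card_div (mapsTo_shiftT_Xf f) (by omega)).trans ?_
    rw [ENNReal.log_natCast_div_natCast hsne.card_pos, EReal.coe_le_coe_iff,
      Nat.cast_sub hkp.le]
    push_cast
    rw [mul_div_assoc', div_le_div_iff_of_pos_right hkp']
    rw [div_lt_iff₀ hk] at hkb
    linarith
  have hlim : Tendsto (fun ε : ℝ => ((b + f.natDegree * (3 * ε) : ℝ) : EReal)) (𝓝[>] 0)
      (𝓝 (b : EReal)) := by
    have h1 : Continuous fun ε : ℝ => ((b + f.natDegree * (3 * ε) : ℝ) : EReal) :=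
      continuous_coe_real_ereal.comp (by fun_prop)
    have h2 := (h1.tendsto 0).mono_left (nhdsWithin_le_nhds (s := Set.Ioi 0))
    simpa using h2
  refine ge_of_tendsto hlim ?_
  filter_upwards [self_mem_nhdsWithin] with ε hε using key ε hε

theorem coverEntropy_le_liminf_log_card_Pk {f : ℤ[X]} (h0 : f.coeff 0 ≠ 0)
    (hnc : Noncyclotomic f) : coverEntropy shiftT (Xf f) ≤
      liminf (fun k : ℕ => ((Real.log (Nat.card (Pk f k)) / (k : ℝ) : ℝ) : EReal)) atTop := by
  refine le_of_forall_gt fun a ha => ?_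
  obtain ⟨b, hb, hba⟩ := EReal.lt_iff_exists_real_btwn.mp ha
  refine (coverEntropy_le_of_frequently h0 hnc ?_).trans_lt hba
  exact (frequently_lt_of_liminf_lt (by isBoundedDefault) hb).mono
    fun k hk => EReal.coe_lt_coe_iff.mp hk

/-- if `f` is irreducible in `ℤ[u^{±1}]` and noncyclotomic, then for every
`k ≥ 1` the set `P_k(α_f)` of points of period `k` is finite, and
`h(α_f) = lim_{k→∞} (1/k) log |P_k(α_f)|`. -/
theorem entropy_periodic_points (f : Polynomial ℤ) (hm : 1 ≤ f.natDegree)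
    (hlead : 0 < f.leadingCoeff) (h0 : f.coeff 0 ≠ 0)
    (hirr : Irreducible (Polynomial.toLaurent f)) (hnc : Noncyclotomic f) :
    (∀ k : ℕ, 0 < k → (Pk f k).Finite) ∧
    Tendsto (fun k : ℕ => ((Real.log (Nat.card (Pk f k)) / (k : ℝ) : ℝ) : EReal)) atTop
      (nhds (Dynamics.coverEntropy shiftT (Xf f))) :=
  ⟨fun _ hk => finite_Pk hnc hk,
    tendsto_of_le_liminf_of_limsup_le (coverEntropy_le_liminf_log_card_Pk h0 hnc)
      (limsup_log_card_Pk_le_coverEntropy hnc)⟩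

end
end

section
/- Suppose f is irreducible in ℤ[u^{±1}] and noncyclotomic. Then there exists a unique bounded real sequence w⁺ ∈ ℓ^∞(ℤ,ℝ) with f(σ̄)(w⁺) = v^Δ and lim_{n→+∞} w⁺_n = 0; moreover the convergence is exponentially fast, i.e. there exist C > 0 and 0 < λ < 1 with |w⁺_n| ≤ C·λ^n for all n ≥ 1. Symmetrically, there is a unique w⁻ ∈ ℓ^∞(ℤ,ℝ) with f(σ̄)(w⁻) = v^Δ and lim_{n→−∞} w⁻_n = 0, with exponentially fast decay as n → −∞. -/
open Filter Topology Polynomial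

noncomputable section

/-- The shift on real sequences, `(σ̄ w)_n = w_{n+1}`. -/
def shiftR (w : ℤ → ℝ) : ℤ → ℝ := fun n => w (n + 1)

/-- `f(σ̄)` on real sequences. -/
def fsR (f : Polynomial ℤ) (w : ℤ → ℝ) : ℤ → ℝ :=
  fun n => ∑ k ∈ Finset.range (f.natDegree + 1), (f.coeff k : ℝ) * w (n + (k : ℤ))

/-- Bounded real sequences, i.e. membership in `ℓ^∞(ℤ,ℝ)`. -/
def Bdd (w : ℤ → ℝ) : Prop := ∃ B : ℝ, ∀ n, |w n| ≤ B

/-- The sequence `v^Δ` with `v^Δ_0 = 1` and `v^Δ_n = 0` otherwise. -/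
def vDelta : ℤ → ℝ := fun n => if n = 0 then 1 else 0

/-- `w⁺`: bounded, `f(σ̄) w = v^Δ`, `w_n → 0` as `n → +∞`. -/
def IsWplus (f : Polynomial ℤ) (w : ℤ → ℝ) : Prop :=
  Bdd w ∧ fsR f w = vDelta ∧ Tendsto w atTop (nhds 0)

/-- `w⁻`: bounded, `f(σ̄) w = v^Δ`, `w_n → 0` as `n → −∞`. -/
def IsWminus (f : Polynomial ℤ) (w : ℤ → ℝ) : Prop :=
  Bdd w ∧ fsR f w = vDelta ∧ Tendsto w atBot (nhds 0)

/-- An element of `ℤ[u]` with nonzero constant term that is irreducible in `ℤ[u^{±1}]` is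
irreducible in `ℤ[u]`. -/
theorem irreducible_of_irreducible_toLaurent {f : ℤ[X]} (h0 : f.coeff 0 ≠ 0)
    (hirr : Irreducible (toLaurent f)) : Irreducible f := by
  have isUnit_of_toLaurent : ∀ a : ℤ[X], a.coeff 0 ≠ 0 → IsUnit (toLaurent a) → IsUnit a := by
    intro a ha hu
    obtain ⟨q, hq⟩ := hu.exists_right_inv
    obtain ⟨n, p, hp⟩ := LaurentPolynomial.exists_T_pow q
    have hap : a * p = X ^ n := by
      apply toLaurent_injective
      rw [map_mul, hp, ← mul_assoc, hq, one_mul, toLaurent_X_pow]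
    obtain ⟨i, -, hi⟩ := (dvd_prime_pow prime_X n).1 ⟨p, hap.symm⟩
    rcases Nat.eq_zero_or_pos i with rfl | hpos
    · exact associated_one_iff_isUnit.1 (by simpa using hi)
    · refine absurd (X_dvd_iff.1 ?_) ha
      exact (dvd_pow_self X hpos.ne').trans hi.symm.dvd
  refine ⟨fun hu => hirr.not_isUnit (hu.map toLaurent), fun a b hab => ?_⟩
  have hcoeff : a.coeff 0 * b.coeff 0 ≠ 0 := by rwa [← mul_coeff_zero, ← hab]
  refine (hirr.isUnit_or_isUnit (by rw [hab, map_mul])).imp ?_ ?_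
  · exact isUnit_of_toLaurent a (left_ne_zero_of_mul hcoeff)
  · exact isUnit_of_toLaurent b (right_ne_zero_of_mul hcoeff)

/-- A nonconstant irreducible integer polynomial is separable over `ℂ`. -/
theorem separable_map_complex_of_irreducible {f : ℤ[X]} (hm : f.natDegree ≠ 0)
    (hirr : Irreducible f) : (f.map (Int.castRingHom ℂ)).Separable := by
  have hQ := (IsPrimitive.Int.irreducible_iff_irreducible_map_cast
    (hirr.isPrimitive hm)).1 hirr
  have hC := hQ.separable.map (f := algebraMap ℚ ℂ)
  rwa [Polynomial.map_map, RingHom.ext_int ((algebraMap ℚ ℂ).comp (Int.castRingHom ℚ))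
    (Int.castRingHom ℂ)] at hC

/-- The shift as a linear endomorphism of the space of complex sequences. -/
def shiftC : Module.End ℂ (ℤ → ℂ) := LinearMap.funLeft ℂ ℂ (fun n : ℤ => n + 1)

theorem shiftC_apply (w : ℤ → ℂ) (n : ℤ) : shiftC w n = w (n + 1) := rfl

theorem shiftC_pow_apply (k : ℕ) (w : ℤ → ℂ) (n : ℤ) : (shiftC ^ k) w n = w (n + k) := by
  induction k generalizing n with
  | zero => simp
  | succ k ih =>
    rw [pow_succ', Module.End.mul_apply, shiftC_apply, ih]
    congr 1
    push_cast
    ring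

theorem aeval_shiftC_X_sub_C (α : ℂ) (w : ℤ → ℂ) (n : ℤ) :
    aeval shiftC (X - C α) w n = w (n + 1) - α * w n := by
  simp [shiftC_apply, Module.algebraMap_end_apply]

theorem aeval_shiftC_map_apply (f : ℤ[X]) (w : ℤ → ℂ) (n : ℤ) :
    aeval shiftC (f.map (Int.castRingHom ℂ)) w n =
      ∑ k ∈ Finset.range (f.natDegree + 1), (f.coeff k : ℂ) * w (n + k) := by
  rw [aeval_eq_sum_range, natDegree_map_eq_of_injective (Int.cast_injective (α := ℂ)),
    LinearMap.sum_apply, Finset.sum_apply]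
  simp [shiftC_pow_apply]

theorem re_aeval_shiftC_map (f : ℤ[X]) (w : ℤ → ℂ) (n : ℤ) :
    (aeval shiftC (f.map (Int.castRingHom ℂ)) w n).re = fsR f (fun k => (w k).re) n := by
  simp [aeval_shiftC_map_apply, fsR]

theorem aeval_shiftC_map_ofReal (f : ℤ[X]) (w : ℤ → ℝ) (n : ℤ) :
    aeval shiftC (f.map (Int.castRingHom ℂ)) (fun k => (w k : ℂ)) n = (fsR f w n : ℂ) := by
  simp [aeval_shiftC_map_apply, fsR]

/-- The bounded complex sequences tending to `0` along `F`. -/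
def boundedVanishing (F : Filter ℤ) : Submodule ℂ (ℤ → ℂ) where
  carrier := {w | (∃ B : ℝ, ∀ n, ‖w n‖ ≤ B) ∧ Tendsto w F (𝓝 0)}
  zero_mem' := ⟨⟨0, by simp⟩, tendsto_const_nhds⟩
  add_mem' := by
    rintro v w ⟨⟨B, hB⟩, hv⟩ ⟨⟨B', hB'⟩, hw⟩
    refine ⟨⟨B + B', fun n => (norm_add_le _ _).trans (add_le_add (hB n) (hB' n))⟩, ?_⟩
    have := hv.add hw
    rwa [add_zero] at this
  smul_mem' := by
    rintro c w ⟨⟨B, hB⟩, hw⟩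
    refine ⟨⟨‖c‖ * B, fun n => ?_⟩, ?_⟩
    · rw [Pi.smul_apply, norm_smul]
      exact mul_le_mul_of_nonneg_left (hB n) (norm_nonneg c)
    · have := hw.const_smul c
      rwa [smul_zero] at this

/-- The bounded complex sequences decaying exponentially on `S`. -/
def boundedExpDecay (S : Set ℤ) : Submodule ℂ (ℤ → ℂ) where
  carrier := {w | (∃ B : ℝ, ∀ n, ‖w n‖ ≤ B) ∧
    ∃ K l : ℝ, 0 ≤ K ∧ 0 < l ∧ l < 1 ∧ ∀ n ∈ S, ‖w n‖ ≤ K * l ^ n.natAbs}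
  zero_mem' := ⟨⟨0, by simp⟩, 0, 1 / 2, by norm_num⟩
  add_mem' := by
    rintro v w ⟨⟨B, hB⟩, K, l, hK, hl, hl1, hv⟩ ⟨⟨B', hB'⟩, K', l', hK', hl', hl1', hw⟩
    refine ⟨⟨B + B', fun n => (norm_add_le _ _).trans (add_le_add (hB n) (hB' n))⟩,
      K + K', max l l', by positivity, lt_max_of_lt_left hl, max_lt hl1 hl1', fun n hn => ?_⟩
    calc ‖v n + w n‖ ≤ ‖v n‖ + ‖w n‖ := norm_add_le _ _
      _ ≤ K * l ^ n.natAbs + K' * l' ^ n.natAbs := add_le_add (hv n hn) (hw n hn)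
      _ ≤ K * max l l' ^ n.natAbs + K' * max l l' ^ n.natAbs := by
        gcongr
        exacts [le_max_left _ _, le_max_right _ _]
      _ = (K + K') * max l l' ^ n.natAbs := by ring
  smul_mem' := by
    rintro c w ⟨⟨B, hB⟩, K, l, hK, hl, hl1, hw⟩
    refine ⟨⟨‖c‖ * B, fun n => ?_⟩, ‖c‖ * K, l, by positivity, hl, hl1, fun n hn => ?_⟩
    · rw [Pi.smul_apply, norm_smul]
      exact mul_le_mul_of_nonneg_left (hB n) (norm_nonneg c)
    · rw [Pi.smul_apply, norm_smul, mul_assoc]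
      exact mul_le_mul_of_nonneg_left (hw n hn) (norm_nonneg c)

theorem boundedExpDecay_le_boundedVanishing {S : Set ℤ} {F : Filter ℤ} (hS : S ∈ F)
    (hF : Tendsto Int.natAbs F atTop) : boundedExpDecay S ≤ boundedVanishing F := by
  rintro w ⟨hB, K, l, -, hl, hl1, hw⟩
  refine ⟨hB, squeeze_zero_norm' (a := fun n : ℤ => K * l ^ n.natAbs)
    (by filter_upwards [hS] using hw) ?_⟩
  simpa using ((tendsto_pow_atTop_nhds_zero_of_lt_one hl.le hl1).comp hF).const_mul K

/-- A shift-invariant space of sequences which contains no nonzero geometric sequence contains no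
nonzero solution of a linear recurrence. -/
theorem eq_zero_of_aeval_shiftC_prod_eq_zero {V : Submodule ℂ (ℤ → ℂ)}
    (hV : ∀ w ∈ V, shiftC w ∈ V)
    (hgeom : ∀ α : ℂ, α ≠ 0 → ∀ d ∈ V, (∀ n, d (n + 1) = α * d n) → d = 0)
    (s : Multiset ℂ) (hs : 0 ∉ s) {d : ℤ → ℂ} (hd : d ∈ V)
    (h : aeval shiftC (s.map fun α => X - C α).prod d = 0) : d = 0 := by
  induction s using Multiset.induction_on generalizing d with
  | empty => simpa using h
  | cons α s ih =>
    rw [Multiset.mem_cons, not_or] at hs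
    rw [Multiset.map_cons, Multiset.prod_cons, mul_comm, map_mul, Module.End.mul_apply] at h
    have hmem : aeval shiftC (X - C α) d ∈ V := by
      have : aeval shiftC (X - C α) d = shiftC d - α • d := by
        ext n
        rw [aeval_shiftC_X_sub_C]
        rfl
      rw [this]
      exact V.sub_mem (hV d hd) (V.smul_mem α hd)
    refine hgeom α (Ne.symm hs.1) d hd fun n => ?_
    rw [← sub_eq_zero, ← aeval_shiftC_X_sub_C, ih hs.2 hmem h, Pi.zero_apply]

/-- Fundamental solutions of the linear factors combine, by partial fractions, to a fundamental
solution of a polynomial with simple roots. -/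
theorem exists_mem_aeval_shiftC_eq {V : Submodule ℂ (ℤ → ℂ)} {p : ℂ[X]} (hp : p.Separable)
    (hdeg : p.natDegree ≠ 0) (v : ℤ → ℂ)
    (hV : ∀ α ∈ p.roots, ∃ e ∈ V, aeval shiftC (X - C α) e = v) :
    ∃ w ∈ V, aeval shiftC p w = v := by
  classical
  have hp0 : p ≠ 0 := by rintro rfl; simp at hdeg
  have hsplit : p.Splits := IsAlgClosed.splits p
  set s : Finset ℂ := p.roots.toFinset with hs
  have hpn : p = C p.leadingCoeff * Lagrange.nodal s id := by
    conv_lhs => rw [hsplit.eq_prod_roots]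
    rw [Lagrange.nodal_eq, hs, Finset.prod, Multiset.toFinset_val,
      Multiset.dedup_eq_self.2 (nodup_roots hp)]
    rfl
  have hne : s.Nonempty := by
    rw [Finset.nonempty_iff_ne_empty]
    intro h
    rw [h, Lagrange.nodal_empty, mul_one] at hpn
    exact hdeg (by rw [hpn, natDegree_C])
  choose! e he hev using hV
  refine ⟨∑ α ∈ s, (p.leadingCoeff⁻¹ * Lagrange.nodalWeight s id α) • e α,
    V.sum_mem fun α hα => V.smul_mem _ (he α (Multiset.mem_toFinset.1 hα)), ?_⟩
  have hterm : ∀ α ∈ s, aeval shiftC p ((p.leadingCoeff⁻¹ * Lagrange.nodalWeight s id α) • e α) =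
      aeval shiftC (Lagrange.basis s id α) v := by
    intro α hα
    rw [Lagrange.basis_eq_prod_sub_inv_mul_nodal_div hα, ← Lagrange.nodal_erase_eq_nodal_div hα,
      ← hev α (Multiset.mem_toFinset.1 hα), ← Module.End.mul_apply, ← map_mul, map_smul,
      ← LinearMap.smul_apply, ← map_smul]
    congr 2
    have hpα := hpn
    rw [Lagrange.nodal_eq_mul_nodal_erase hα, id] at hpα
    rw [smul_eq_C_mul, C_mul]
    have hc : C p.leadingCoeff⁻¹ * C p.leadingCoeff = (1 : ℂ[X]) := by
      rw [← C_mul, inv_mul_cancel₀ (leadingCoeff_ne_zero.2 hp0), C_1]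
    linear_combination (C p.leadingCoeff⁻¹ * C (Lagrange.nodalWeight s id α)) * hpα +
      (C (Lagrange.nodalWeight s id α) * (X - C α) *
      Lagrange.nodal (s.erase α) id) * hc
  rw [map_sum, Finset.sum_congr rfl hterm, ← LinearMap.sum_apply, ← map_sum,
    Lagrange.sum_basis Function.injective_id.injOn hne, map_one, Module.End.one_apply]

/-- The complex form of `vDelta`. -/
def vDeltaC : ℤ → ℂ := fun n => (vDelta n : ℂ)

/-- The solution of `w_{n+1} - α w_n = v^Δ_n` supported on `n ≥ 1`. -/
def forwardSolution (α : ℂ) : ℤ → ℂ := fun n => if 1 ≤ n then α ^ (n - 1) else 0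

/-- The solution of `w_{n+1} - α w_n = v^Δ_n` supported on `n ≤ 0`. -/
def backwardSolution (α : ℂ) : ℤ → ℂ := fun n => if 1 ≤ n then 0 else -α ^ (n - 1)

theorem aeval_shiftC_forwardSolution {α : ℂ} (hα : α ≠ 0) :
    aeval shiftC (X - C α) (forwardSolution α) = vDeltaC := by
  ext n
  rw [aeval_shiftC_X_sub_C]
  rcases lt_trichotomy n 0 with h | rfl | h
  · simp [forwardSolution, vDeltaC, vDelta, h.ne, show ¬ 1 ≤ n + 1 by omega,
      show ¬ 1 ≤ n by omega]
  · simp [forwardSolution, vDeltaC, vDelta]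
  · simp [forwardSolution, vDeltaC, vDelta, h.ne', show 1 ≤ n + 1 by omega,
      show 1 ≤ n by omega, zpow_sub_one₀ hα]
    field_simp
    ring

theorem aeval_shiftC_backwardSolution {α : ℂ} (hα : α ≠ 0) :
    aeval shiftC (X - C α) (backwardSolution α) = vDeltaC := by
  ext n
  rw [aeval_shiftC_X_sub_C]
  rcases lt_trichotomy n 0 with h | rfl | h
  · simp [backwardSolution, vDeltaC, vDelta, h.ne, show ¬ 1 ≤ n + 1 by omega,
      show ¬ 1 ≤ n by omega, zpow_sub_one₀ hα]
    field_simp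
    ring
  · simp [backwardSolution, vDeltaC, vDelta, hα]
  · simp [backwardSolution, vDeltaC, vDelta, h.ne', show 1 ≤ n + 1 by omega,
      show 1 ≤ n by omega]

theorem norm_forwardSolution_le {α : ℂ} (hα : α ≠ 0) {n : ℤ} (hn : 0 ≤ n) :
    ‖forwardSolution α n‖ ≤ ‖α‖⁻¹ * ‖α‖ ^ n.natAbs := by
  unfold forwardSolution
  split_ifs with h
  · obtain ⟨k, rfl⟩ := Int.eq_ofNat_of_zero_le hn
    rw [norm_zpow, zpow_sub_one₀ (norm_ne_zero_iff.2 hα), mul_comm]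
    simp
  · rw [norm_zero]
    positivity

theorem norm_backwardSolution_le {α : ℂ} (hα : α ≠ 0) {n : ℤ} (hn : n ≤ 0) :
    ‖backwardSolution α n‖ ≤ ‖α‖⁻¹ * ‖α‖⁻¹ ^ n.natAbs := by
  rw [backwardSolution, if_neg (by omega)]
  obtain ⟨k, rfl⟩ := Int.exists_eq_neg_ofNat hn
  rw [norm_neg, norm_zpow, zpow_sub_one₀ (norm_ne_zero_iff.2 hα), mul_comm]
  simp

theorem exists_bound_forwardSolution {α : ℂ} (hα : ‖α‖ ≤ 1) :
    ∃ B : ℝ, ∀ n, ‖forwardSolution α n‖ ≤ B := by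
  refine ⟨1, fun n => ?_⟩
  unfold forwardSolution
  split_ifs with h
  · obtain ⟨k, hk⟩ := Int.eq_ofNat_of_zero_le (sub_nonneg.2 h)
    rw [hk, norm_zpow]
    exact_mod_cast pow_le_one₀ (norm_nonneg α) hα
  · simp

theorem exists_bound_backwardSolution {α : ℂ} (hα : 1 ≤ ‖α‖) :
    ∃ B : ℝ, ∀ n, ‖backwardSolution α n‖ ≤ B := by
  refine ⟨1, fun n => ?_⟩
  unfold backwardSolution
  split_ifs with h
  · simp
  · rw [norm_neg, norm_zpow]
    exact zpow_le_one_of_nonpos₀ hα (by omega)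

theorem exists_mem_boundedExpDecay_Ici {α : ℂ} (hα : α ≠ 0) :
    ∃ e ∈ boundedExpDecay (Set.Ici 1), aeval shiftC (X - C α) e = vDeltaC := by
  rcases lt_or_ge ‖α‖ 1 with h | h
  · exact ⟨forwardSolution α, ⟨exists_bound_forwardSolution h.le, ‖α‖⁻¹, ‖α‖, by positivity,
      norm_pos_iff.2 hα, h, fun n hn => norm_forwardSolution_le hα (zero_le_one.trans hn)⟩,
      aeval_shiftC_forwardSolution hα⟩
  · refine ⟨backwardSolution α, ⟨exists_bound_backwardSolution h, 0, 1 / 2, le_rfl,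
      by norm_num, by norm_num, fun n hn => ?_⟩, aeval_shiftC_backwardSolution hα⟩
    rw [backwardSolution, if_pos (Set.mem_Ici.1 hn)]
    simp

theorem exists_mem_boundedExpDecay_Iic {α : ℂ} (hα : α ≠ 0) :
    ∃ e ∈ boundedExpDecay (Set.Iic (-1)), aeval shiftC (X - C α) e = vDeltaC := by
  rcases lt_or_ge 1 ‖α‖ with h | h
  · exact ⟨backwardSolution α, ⟨exists_bound_backwardSolution h.le, ‖α‖⁻¹, ‖α‖⁻¹, by positivity,
      inv_pos.2 (norm_pos_iff.2 hα), inv_lt_one_of_one_lt₀ h,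
      fun n hn => norm_backwardSolution_le hα (le_trans hn (by norm_num))⟩,
      aeval_shiftC_backwardSolution hα⟩
  · refine ⟨forwardSolution α, ⟨exists_bound_forwardSolution h, 0, 1 / 2, le_rfl,
      by norm_num, by norm_num, fun n hn => ?_⟩, aeval_shiftC_forwardSolution hα⟩
    rw [forwardSolution, if_neg (by have := Set.mem_Iic.1 hn; omega)]
    simp

theorem eq_zpow_mul_of_geometric {α : ℂ} (hα : α ≠ 0) {d : ℤ → ℂ}
    (h : ∀ n, d (n + 1) = α * d n) (n : ℤ) : d n = α ^ n * d 0 := by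
  induction n using Int.induction_on with
  | zero => simp
  | succ k ih => rw [h, ih, zpow_add_one₀ hα]; ring
  | pred k ih =>
    have := h (-k - 1)
    rw [sub_add_cancel, ih] at this
    rw [zpow_sub_one₀ hα]
    field_simp
    rw [mul_comm (d _), ← this, mul_comm]

theorem geometric_eq_zero_of_apply_zero {α : ℂ} (hα : α ≠ 0) {d : ℤ → ℂ}
    (h : ∀ n, d (n + 1) = α * d n) (h0 : d 0 = 0) : d = 0 := by
  ext n
  rw [eq_zpow_mul_of_geometric hα h, h0, mul_zero, Pi.zero_apply]

/-- A nonzero geometric sequence whose ratio has modulus different from `1` is unbounded. -/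
theorem geometric_eq_zero_of_bounded {α : ℂ} (hα : α ≠ 0) (hα1 : ‖α‖ ≠ 1) {d : ℤ → ℂ}
    (h : ∀ n, d (n + 1) = α * d n) {B : ℝ} (hB : ∀ n, ‖d n‖ ≤ B) : d = 0 := by
  refine geometric_eq_zero_of_apply_zero hα h ?_
  by_contra hd
  have hd' : 0 < ‖d 0‖ := norm_pos_iff.2 hd
  have key : ∀ n : ℤ, ‖α‖ ^ n ≤ B / ‖d 0‖ := fun n => by
    rw [le_div_iff₀ hd', ← norm_zpow, ← norm_mul, ← eq_zpow_mul_of_geometric hα h]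
    exact hB n
  rcases lt_or_gt_of_ne hα1 with h1 | h1
  · obtain ⟨k, hk⟩ := pow_unbounded_of_one_lt (B / ‖d 0‖)
      ((one_lt_inv₀ (norm_pos_iff.2 hα)).2 h1)
    exact absurd (key (-k)) (not_le.2 (by simpa using hk))
  · obtain ⟨k, hk⟩ := pow_unbounded_of_one_lt (B / ‖d 0‖) h1
    exact absurd (key k) (not_le.2 (by simpa using hk))

theorem geometric_eq_zero_of_mem_boundedVanishing {F : Filter ℤ} [F.NeBot] {α : ℂ} (hα : α ≠ 0)
    {d : ℤ → ℂ} (hd : d ∈ boundedVanishing F) (h : ∀ n, d (n + 1) = α * d n) : d = 0 := by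
  obtain ⟨⟨B, hB⟩, hlim⟩ := hd
  by_cases h1 : ‖α‖ = 1
  · refine geometric_eq_zero_of_apply_zero hα h ?_
    have hnorm : ∀ n, ‖d n‖ = ‖d 0‖ := fun n => by
      rw [eq_zpow_mul_of_geometric hα h, norm_mul, norm_zpow, h1, one_zpow, one_mul]
    have := hlim.norm
    simp only [hnorm, norm_zero] at this
    exact norm_eq_zero.1 (tendsto_nhds_unique tendsto_const_nhds this)
  · exact geometric_eq_zero_of_bounded hα h1 h hB

theorem shiftC_mem_boundedVanishing {F : Filter ℤ} (hF : Tendsto (fun n : ℤ => n + 1) F F)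
    {w : ℤ → ℂ} (hw : w ∈ boundedVanishing F) : shiftC w ∈ boundedVanishing F :=
  ⟨hw.1.imp fun _ hB n => hB (n + 1), hw.2.comp hF⟩

/-- The bounded solution of `f(σ̄) w = v^Δ` vanishing along `F` exists, is unique, and decays
exponentially on `S`, provided all linear factors admit exponentially decaying solutions. -/
theorem existsUnique_and_expDecay {f : ℤ[X]} (hm : f.natDegree ≠ 0) (h0 : f.coeff 0 ≠ 0)
    (hirr : Irreducible (toLaurent f)) {S : Set ℤ} {F : Filter ℤ} [F.NeBot] (hS : S ∈ F)
    (hF : Tendsto Int.natAbs F atTop) (hshift : Tendsto (fun n : ℤ => n + 1) F F)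
    (hlin : ∀ α : ℂ, α ≠ 0 → ∃ e ∈ boundedExpDecay S, aeval shiftC (X - C α) e = vDeltaC) :
    (∃! w : ℤ → ℝ, Bdd w ∧ fsR f w = vDelta ∧ Tendsto w F (𝓝 0)) ∧
    ∀ w : ℤ → ℝ, (Bdd w ∧ fsR f w = vDelta ∧ Tendsto w F (𝓝 0)) →
      ∃ K > (0 : ℝ), ∃ l : ℝ, 0 < l ∧ l < 1 ∧ ∀ n ∈ S, |w n| ≤ K * l ^ n.natAbs := by
  set p := f.map (Int.castRingHom ℂ) with hp
  have hsep : p.Separable :=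
    separable_map_complex_of_irreducible hm (irreducible_of_irreducible_toLaurent h0 hirr)
  have hdeg : p.natDegree ≠ 0 := by
    rwa [hp, natDegree_map_eq_of_injective (Int.cast_injective (α := ℂ))]
  have hp0 : p ≠ 0 := by
    intro h
    rw [h, natDegree_zero] at hdeg
    exact hdeg rfl
  have hroot : (0 : ℂ) ∉ p.roots := by
    intro h
    have := isRoot_of_mem_roots h
    rw [IsRoot, ← coeff_zero_eq_eval_zero, hp, coeff_map] at this
    exact h0 (by simpa using this)
  obtain ⟨z, ⟨⟨B, hB⟩, K, l, hK, hl, hl1, hz⟩, hzv⟩ := exists_mem_aeval_shiftC_eq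
    (V := boundedExpDecay S) hsep hdeg vDeltaC
    fun α hα => hlin α (by rintro rfl; exact hroot hα)
  have hzlim : Tendsto z F (𝓝 0) := (boundedExpDecay_le_boundedVanishing hS hF
    (show z ∈ boundedExpDecay S from ⟨⟨B, hB⟩, K, l, hK, hl, hl1, hz⟩)).2
  have hsol : Bdd (fun n => (z n).re) ∧ fsR f (fun n => (z n).re) = vDelta ∧
      Tendsto (fun n => (z n).re) F (𝓝 0) := by
    refine ⟨⟨B, fun n => (Complex.abs_re_le_norm _).trans (hB n)⟩, ?_, ?_⟩
    · ext n
      rw [← re_aeval_shiftC_map, hzv, vDeltaC, Complex.ofReal_re]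
    · simpa [Function.comp_def] using (Complex.continuous_re.tendsto 0).comp hzlim
  have hmem : ∀ w : ℤ → ℝ, Bdd w → Tendsto w F (𝓝 0) →
      (fun n => (w n : ℂ)) ∈ boundedVanishing F := by
    rintro w ⟨B, hB⟩ hw
    refine ⟨⟨B, fun n => by simpa using hB n⟩, ?_⟩
    simpa [Function.comp_def] using (Complex.continuous_ofReal.tendsto 0).comp hw
  have huniq : ∀ w : ℤ → ℝ, (Bdd w ∧ fsR f w = vDelta ∧ Tendsto w F (𝓝 0)) →
      w = fun n => (z n).re := by
    rintro w ⟨hwB, hwf, hwlim⟩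
    have hd := eq_zero_of_aeval_shiftC_prod_eq_zero (V := boundedVanishing F)
      (fun w hw => shiftC_mem_boundedVanishing hshift hw)
      (fun α hα d hd h => geometric_eq_zero_of_mem_boundedVanishing hα hd h) p.roots hroot
      (sub_mem (hmem w hwB hwlim) (hmem _ hsol.1 hsol.2.2)) ?_
    · ext n
      have := congrFun hd n
      rw [Pi.sub_apply, Pi.zero_apply, sub_eq_zero] at this
      exact_mod_cast this
    · have hpd : aeval shiftC p ((fun n => (w n : ℂ)) - fun n => ((z n).re : ℂ)) = 0 := by
        ext n
        rw [map_sub, Pi.sub_apply, hp, aeval_shiftC_map_ofReal,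
          aeval_shiftC_map_ofReal f (fun n => (z n).re), hwf, hsol.2.1, sub_self, Pi.zero_apply]
      rw [(IsAlgClosed.splits p).eq_prod_roots, map_mul, Module.End.mul_apply, aeval_C,
        Module.algebraMap_end_apply] at hpd
      exact (smul_eq_zero.1 hpd).resolve_left (leadingCoeff_ne_zero.2 hp0)
  refine ⟨⟨_, hsol, huniq⟩, fun w hw => ⟨K + 1, by positivity, l, hl, hl1, fun n hn => ?_⟩⟩
  rw [huniq w hw]
  calc |(z n).re| ≤ ‖z n‖ := Complex.abs_re_le_norm _
    _ ≤ K * l ^ n.natAbs := hz n hn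
    _ ≤ (K + 1) * l ^ n.natAbs := by gcongr; linarith

/-- if `f` is irreducible in `ℤ[u^{±1}]` and noncyclotomic, there is a unique
bounded real sequence `w⁺` with `f(σ̄)(w⁺) = v^Δ` and `w⁺_n → 0` as `n → +∞`, and the decay
is exponentially fast; symmetrically for `w⁻` as `n → −∞`. -/
theorem exists_unique_wplus_wminus (f : Polynomial ℤ) (hm : 1 ≤ f.natDegree)
    (hlead : 0 < f.leadingCoeff) (h0 : f.coeff 0 ≠ 0)
    (hirr : Irreducible (Polynomial.toLaurent f)) (hnc : Noncyclotomic f) :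
    (∃! w : ℤ → ℝ, IsWplus f w) ∧
    (∀ w : ℤ → ℝ, IsWplus f w →
      ∃ C > (0:ℝ), ∃ l : ℝ, 0 < l ∧ l < 1 ∧ ∀ n : ℤ, 1 ≤ n → |w n| ≤ C * l ^ n) ∧
    (∃! w : ℤ → ℝ, IsWminus f w) ∧
    (∀ w : ℤ → ℝ, IsWminus f w →
      ∃ C > (0:ℝ), ∃ l : ℝ, 0 < l ∧ l < 1 ∧ ∀ n : ℤ, n ≤ -1 → |w n| ≤ C * l ^ (-n)) := by
  have hm' : f.natDegree ≠ 0 := by omega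
  obtain ⟨hplus, hplus'⟩ := existsUnique_and_expDecay hm' h0 hirr (F := atTop)
    (Ici_mem_atTop (1 : ℤ))
    (tendsto_atTop_atTop.2 fun b => ⟨b, fun a ha => by omega⟩)
    (tendsto_atTop_add_const_right _ _ tendsto_id) (fun _ => exists_mem_boundedExpDecay_Ici)
  obtain ⟨hminus, hminus'⟩ := existsUnique_and_expDecay hm' h0 hirr (F := atBot)
    (Iic_mem_atBot (-1 : ℤ))
    (tendsto_atBot_atTop.2 fun b => ⟨-b, fun a ha => by omega⟩)
    (tendsto_atBot_add_const_right _ _ tendsto_id) (fun _ => exists_mem_boundedExpDecay_Iic)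
  refine ⟨hplus, fun w hw => ?_, hminus, fun w hw => ?_⟩
  · obtain ⟨K, hK, l, hl, hl1, h⟩ := hplus' w hw
    refine ⟨K, hK, l, hl, hl1, fun n hn => ?_⟩
    rw [← Int.natAbs_of_nonneg (zero_le_one.trans hn), zpow_natCast,
      Int.natAbs_of_nonneg (zero_le_one.trans hn)]
    exact h n hn
  · obtain ⟨K, hK, l, hl, hl1, h⟩ := hminus' w hw
    refine ⟨K, hK, l, hl, hl1, fun n hn => ?_⟩
    rw [← Int.ofNat_natAbs_of_nonpos (hn.trans (by norm_num)), zpow_natCast]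
    exact h n hn

end
end

section
/- Suppose f is irreducible in ℤ[u^{±1}] and noncyclotomic. Then for every v ∈ ℓ^∞(ℤ,ℤ), the sequence ξ̄*(v) satisfies f(σ̄)(ξ̄*(v)) = v, and for every w ∈ W_f one has ξ̄*(f(σ̄)(w)) − w ∈ W_f^∘ = ker f(σ̄). -/
open Filter Topology Polynomial

noncomputable section

/-- Bounded integer sequences. -/
def BddZ (v : ℤ → ℤ) : Prop := ∃ B : ℤ, ∀ n, |v n| ≤ B

/-- `ξ̄*(v)_k = ∑_{n≥0} v_n w⁻_{k-n} + ∑_{n<0} v_n w⁺_{k-n}`. -/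
def xiStar (wp wm : ℤ → ℝ) (v : ℤ → ℤ) : ℤ → ℝ :=
  fun k => ∑' n : ℤ, (v n : ℝ) * (if 0 ≤ n then wm (k - n) else wp (k - n))

/-- Membership in `W_f = f(σ̄)^{-1}(ℓ^∞(ℤ,ℤ)) ⊆ ℓ^∞(ℤ,ℝ)`. -/
def InWf (f : Polynomial ℤ) (w : ℤ → ℝ) : Prop :=
  Bdd w ∧ ∀ n, ∃ z : ℤ, fsR f w n = (z : ℝ)

/-- Membership in `V_f = f(σ̄)(W_f)` for an integer sequence. -/
def InVf (f : Polynomial ℤ) (v : ℤ → ℤ) : Prop :=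
  ∃ w : ℤ → ℝ, Bdd w ∧ ∀ n, fsR f w n = (v n : ℝ)

/-- The sequence `a` is bounded by a geometric sequence of ratio less than one. -/
def GeomDecay (a : ℕ → ℂ) : Prop :=
  ∃ C r : ℝ, 0 ≤ C ∧ 0 < r ∧ r < 1 ∧ ∀ n, ‖a n‖ ≤ C * r ^ n

/-- The shift on one-sided complex sequences. -/
def natShift : Module.End ℂ (ℕ → ℂ) where
  toFun a n := a (n + 1)
  map_add' _ _ := rfl
  map_smul' _ _ := rfl

lemma natShift_pow_apply (j : ℕ) (a : ℕ → ℂ) (n : ℕ) : (natShift ^ j) a n = a (n + j) := by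
  induction j generalizing n with
  | zero => rfl
  | succ j ih =>
    rw [pow_succ', Module.End.mul_apply]
    change (natShift ^ j) a (n + 1) = _
    rw [ih]
    congr 1
    ring

lemma GeomDecay.summable_norm {a : ℕ → ℂ} (h : GeomDecay a) : Summable fun n => ‖a n‖ := by
  obtain ⟨C, r, _, hr0, hr1, h⟩ := h
  exact Summable.of_nonneg_of_le (fun _ => norm_nonneg _) h
    ((summable_geometric_of_lt_one hr0.le hr1).mul_left C)

/-- A null sequence `a` decays geometrically as soon as `a (n + 1) - θ * a n` does. -/
lemma GeomDecay.of_sub_mul {a : ℕ → ℂ} {θ : ℂ} (ha : Tendsto a atTop (𝓝 0))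
    (h : GeomDecay fun n => a (n + 1) - θ * a n) : GeomDecay a := by
  obtain ⟨C, r, hC, hr0, hr1, h⟩ := h
  rcases lt_or_ge ‖θ‖ 1 with hθ | hθ
  · obtain ⟨s, hs, hs1⟩ := exists_between (max_lt hr1 hθ)
    have hrs : r < s := (le_max_left _ _).trans_lt hs
    have hθs : ‖θ‖ < s := (le_max_right _ _).trans_lt hs
    have hs0 : 0 < s := hr0.trans hrs
    have hsub : 0 < s - ‖θ‖ := sub_pos.2 hθs
    set D := max ‖a 0‖ (C / (s - ‖θ‖)) with hD
    have hDC : C ≤ D * (s - ‖θ‖) := (div_le_iff₀ hsub).1 (le_max_right _ _)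
    refine ⟨D, s, (norm_nonneg _).trans (le_max_left _ _), hs0, hs1, fun n => ?_⟩
    induction n with
    | zero => simp [hD]
    | succ n ih =>
      have hpow : r ^ n ≤ s ^ n := pow_le_pow_left₀ hr0.le hrs.le n
      calc ‖a (n + 1)‖ = ‖(a (n + 1) - θ * a n) + θ * a n‖ := by ring_nf
        _ ≤ ‖a (n + 1) - θ * a n‖ + ‖θ‖ * ‖a n‖ := by
          rw [← norm_mul]; exact norm_add_le _ _
        _ ≤ C * s ^ n + ‖θ‖ * (D * s ^ n) := by
          refine add_le_add ((h n).trans ?_) ?_ <;> gcongr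
        _ ≤ D * (s - ‖θ‖) * s ^ n + ‖θ‖ * (D * s ^ n) := by gcongr
        _ = D * s ^ (n + 1) := by ring
  · have h1r : 0 < 1 - r := sub_pos.2 hr1
    refine ⟨C / (1 - r), r, by positivity, hr0, hr1, fun n => ?_⟩
    have hmono : Monotone fun n => ‖a n‖ - C / (1 - r) * r ^ n := by
      refine monotone_nat_of_le_succ fun n => ?_
      have h1 : ‖a n‖ ≤ ‖θ * a n‖ := by
        rw [norm_mul]; exact le_mul_of_one_le_left (norm_nonneg _) hθ
      have h2 : ‖θ * a n‖ ≤ ‖a (n + 1)‖ + ‖a (n + 1) - θ * a n‖ := by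
        simpa using norm_sub_le (a (n + 1)) (a (n + 1) - θ * a n)
      have h3 : C / (1 - r) * r ^ n - C / (1 - r) * r ^ (n + 1) = C * r ^ n := by
        field_simp
        ring
      linarith [h n]
    have hlim : Tendsto (fun n => ‖a n‖ - C / (1 - r) * r ^ n) atTop (𝓝 0) := by
      simpa using ha.norm.sub
        ((tendsto_pow_atTop_nhds_zero_of_lt_one hr0.le hr1).const_mul (C / (1 - r)))
    linarith [hmono.ge_of_tendsto hlim n]

lemma GeomDecay.of_multiset_prod (s : Multiset ℂ) (a : ℕ → ℂ) (ha : Tendsto a atTop (𝓝 0))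
    (h : GeomDecay (aeval natShift (s.map fun θ => X - C θ).prod a)) : GeomDecay a := by
  induction s using Multiset.induction_on generalizing a with
  | empty => simpa using h
  | cons θ s ih =>
    have hstep : aeval natShift (X - C θ) a = fun n => a (n + 1) - θ * a n := by
      ext n
      simp [natShift, Module.algebraMap_end_apply]
    rw [Multiset.map_cons, Multiset.prod_cons, mul_comm, map_mul, Module.End.mul_apply,
      hstep] at h
    refine .of_sub_mul ha (ih _ ?_ h)
    simpa using ((tendsto_add_atTop_iff_nat 1).2 ha).sub (ha.const_mul θ)

lemma GeomDecay.of_aeval_natShift_eq_zero {P : ℂ[X]} (hP : P ≠ 0) {a : ℕ → ℂ}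
    (ha : Tendsto a atTop (𝓝 0)) (h : aeval natShift P a = 0) : GeomDecay a := by
  refine .of_multiset_prod P.roots a ha ?_
  have hprod := (IsAlgClosed.splits P).eq_prod_roots
  rw [hprod, map_mul, Module.End.mul_apply, aeval_C, Module.algebraMap_end_apply,
    smul_eq_zero, or_iff_right (leadingCoeff_ne_zero.2 hP)] at h
  rw [h]
  exact ⟨0, 1 / 2, le_rfl, by norm_num, by norm_num, by simp⟩

/-- Null sequences that eventually satisfy a linear recurrence are absolutely summable. -/
lemma summable_abs_of_recurrence {m : ℕ} {c : ℕ → ℝ} {i : ℕ} (hi : i ≤ m) (hc : c i ≠ 0)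
    {a : ℕ → ℝ} (ha : Tendsto a atTop (𝓝 0))
    (h : ∀ᶠ n in atTop, ∑ j ∈ Finset.range (m + 1), c j * a (n + j) = 0) :
    Summable fun n => |a n| := by
  obtain ⟨N, hN⟩ := eventually_atTop.1 h
  let P : ℂ[X] := ∑ j ∈ Finset.range (m + 1), C (c j : ℂ) * X ^ j
  have hP : P ≠ 0 := by
    intro h0
    have hcoeff : P.coeff i = c i := by
      simp only [P, finsetSum_coeff, coeff_C_mul_X_pow, Finset.sum_ite_eq, Finset.mem_range]
      rw [if_pos (by omega)]
    rw [h0, coeff_zero] at hcoeff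
    exact hc (by exact_mod_cast hcoeff.symm)
  have hlim : Tendsto (fun n => (a (n + N) : ℂ)) atTop (𝓝 0) := by
    simpa [Function.comp_def] using (Complex.continuous_ofReal.tendsto 0).comp ((tendsto_add_atTop_iff_nat N).2 ha)
  have hzero : aeval natShift P (fun n => (a (n + N) : ℂ)) = 0 := by
    ext n
    have := congrArg (Complex.ofReal) (hN (n + N) (by omega))
    push_cast at this
    simp only [P, map_sum, map_mul, aeval_C, map_pow, aeval_X, LinearMap.sum_apply,
      Module.End.mul_apply, Module.algebraMap_end_apply, Finset.sum_apply, Pi.smul_apply,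
      natShift_pow_apply, smul_eq_mul, Pi.zero_apply]
    rw [← this]
    refine Finset.sum_congr rfl fun j _ => ?_
    rw [add_right_comm]
  rw [← summable_nat_add_iff N]
  simpa using (GeomDecay.of_aeval_natShift_eq_zero hP hlim hzero).summable_norm

section

variable {f : ℤ[X]} {wp wm : ℤ → ℝ}

lemma IsWplus.summable_abs (h : IsWplus f wp) (hf : f ≠ 0) (k : ℤ) :
    Summable fun n : ℕ => |wp (k + n)| := by
  refine summable_abs_of_recurrence (c := fun j => (f.coeff j : ℝ)) le_rfl
    (Int.cast_ne_zero.2 (leadingCoeff_ne_zero.2 hf))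
    (h.2.2.comp (tendsto_atTop_add_const_left _ k tendsto_natCast_atTop_atTop)) ?_
  filter_upwards [eventually_gt_atTop (-k).toNat] with n hn
  have := congrFun h.2.1 (k + n)
  rw [vDelta, if_neg (by omega)] at this
  rw [← this]
  exact Finset.sum_congr rfl fun j _ => by push_cast; rw [add_assoc]

lemma IsWminus.summable_abs (h : IsWminus f wm) (hf : f ≠ 0) (k : ℤ) :
    Summable fun n : ℕ => |wm (k - n)| := by
  have hlim : Tendsto (fun n : ℕ => k - (n : ℤ)) atTop atBot := by
    simpa [sub_eq_add_neg] using tendsto_atBot_add_const_left _ k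
      (tendsto_neg_atTop_atBot.comp (tendsto_natCast_atTop_atTop (R := ℤ)))
  refine summable_abs_of_recurrence (c := fun j => (f.coeff (f.natDegree - j) : ℝ))
    (Nat.zero_le f.natDegree) (Int.cast_ne_zero.2 (leadingCoeff_ne_zero.2 hf))
    (h.2.2.comp hlim) ?_
  filter_upwards [eventually_gt_atTop k.toNat] with n hn
  have := congrFun h.2.1 (k - n - f.natDegree)
  rw [vDelta, if_neg (by omega)] at this
  rw [← this, fsR, ← Finset.sum_range_reflect]
  refine Finset.sum_congr rfl fun j hj => ?_
  have hj := Finset.mem_range.1 hj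
  rw [show f.natDegree + 1 - 1 - j = f.natDegree - j by omega,
    show f.natDegree - (f.natDegree - j) = j by omega]
  congr 2
  omega

/-- The kernel `(k, n) ↦ w⁻_{k-n}` for `n ≥ 0` and `w⁺_{k-n}` for `n < 0`. -/
def xiKernel (wp wm : ℤ → ℝ) (k n : ℤ) : ℝ := if 0 ≤ n then wm (k - n) else wp (k - n)

lemma summable_abs_mul_xiKernel (hf : f ≠ 0) (hwp : IsWplus f wp) (hwm : IsWminus f wm)
    {x : ℤ → ℝ} (hx : Bdd x) (k : ℤ) : Summable fun n => |x n * xiKernel wp wm k n| := by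
  obtain ⟨B, hB⟩ := hx
  have hker : Summable fun n => |xiKernel wp wm k n| := by
    refine Summable.of_nat_of_neg_add_one ?_ ?_
    · simpa [xiKernel] using hwm.summable_abs hf k
    · refine (hwp.summable_abs hf (k + 1)).congr fun n => ?_
      rw [xiKernel, if_neg (by omega)]
      congr 2
      ring
  refine Summable.of_nonneg_of_le (fun _ => abs_nonneg _) (fun n => ?_) (hker.mul_left B)
  rw [abs_mul]
  exact mul_le_mul_of_nonneg_right (hB n) (abs_nonneg _)

lemma hasSum_mul_vDelta (x : ℤ → ℝ) (k : ℤ) : HasSum (fun n => x n * vDelta (k - n)) (x k) := by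
  have h := hasSum_single (f := fun n => x n * vDelta (k - n)) k fun n hn => by
    rw [vDelta, if_neg (by omega), mul_zero]
  simpa [vDelta] using h

lemma sum_coeff_mul_xiKernel (hwp : fsR f wp = vDelta) (hwm : fsR f wm = vDelta) (k n : ℤ) :
    ∑ j ∈ Finset.range (f.natDegree + 1), (f.coeff j : ℝ) * xiKernel wp wm (k + j) n
      = vDelta (k - n) := by
  by_cases hn : 0 ≤ n
  · rw [← hwm]
    exact Finset.sum_congr rfl fun j _ => by rw [xiKernel, if_pos hn, add_sub_right_comm]
  · rw [← hwp]
    exact Finset.sum_congr rfl fun j _ => by rw [xiKernel, if_neg hn, add_sub_right_comm]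

lemma xiKernel_sub (k n j : ℤ) (hj : 0 ≤ j) :
    xiKernel wp wm k (n - j) = xiKernel wp wm (k + j) n +
      if 0 ≤ n ∧ n < j then wp (k + j - n) - wm (k + j - n) else 0 := by
  rw [xiKernel, xiKernel, show k - (n - j) = k + j - n by ring]
  split_ifs <;> first | omega | ring

lemma bdd_fsR {w : ℤ → ℝ} (hw : Bdd w) : Bdd (fsR f w) := by
  obtain ⟨B, hB⟩ := hw
  refine ⟨∑ k ∈ Finset.range (f.natDegree + 1), |(f.coeff k : ℝ)| * B, fun n => ?_⟩
  refine (Finset.abs_sum_le_sum_abs _ _).trans (Finset.sum_le_sum fun k _ => ?_)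
  rw [abs_mul]
  exact mul_le_mul_of_nonneg_left (hB _) (abs_nonneg _)

lemma fsR_sub (x y : ℤ → ℝ) (n : ℤ) :
    fsR f (fun k => x k - y k) n = fsR f x n - fsR f y n := by
  simp only [fsR, mul_sub, Finset.sum_sub_distrib]

lemma fsR_xiStar (hf : f ≠ 0) (hwp : IsWplus f wp) (hwm : IsWminus f wm) {v : ℤ → ℤ}
    (hv : Bdd fun n => (v n : ℝ)) (k : ℤ) : fsR f (xiStar wp wm v) k = v k := by
  have h : HasSum (fun n => ∑ j ∈ Finset.range (f.natDegree + 1),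
      (f.coeff j : ℝ) * ((v n : ℝ) * xiKernel wp wm (k + j) n)) (fsR f (xiStar wp wm v) k) :=
    hasSum_sum fun j _ =>
      (summable_abs_mul_xiKernel hf hwp hwm hv (k + j)).of_abs.hasSum.mul_left _
  refine h.unique ((hasSum_mul_vDelta (fun n => (v n : ℝ)) k).congr_fun fun n => ?_)
  rw [← sum_coeff_mul_xiKernel hwp.2.1 hwm.2.1, Finset.mul_sum]
  exact Finset.sum_congr rfl fun j _ => by ring

/-- Summation by parts: `ξ̄*(f(σ̄)(w)) - w` is a finite combination of shifts of `w⁺ - w⁻`. -/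
lemma xiStar_sub_eq (hf : f ≠ 0) (hwp : IsWplus f wp) (hwm : IsWminus f wm) {w : ℤ → ℝ}
    (hw : Bdd w) {v : ℤ → ℤ} (hv : ∀ n, (v n : ℝ) = fsR f w n) (k : ℤ) :
    xiStar wp wm v k - w k = ∑ n ∈ Finset.Ico (0 : ℤ) f.natDegree,
      ∑ j ∈ Finset.range (f.natDegree + 1), (f.coeff j : ℝ) *
        (w n * if 0 ≤ n ∧ n < (j : ℤ) then wp (k + j - n) - wm (k + j - n) else 0) := by
  have hshift (j : ℕ) : Summable fun n : ℤ => w (n + j) * xiKernel wp wm k n := by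
    obtain ⟨B, hB⟩ := hw
    exact (summable_abs_mul_xiKernel (x := fun n => w (n + j)) hf hwp hwm
      ⟨B, fun n => hB _⟩ k).of_abs
  have hxi : HasSum (fun n => ∑ j ∈ Finset.range (f.natDegree + 1),
      (f.coeff j : ℝ) * (w n * xiKernel wp wm k (n - j))) (xiStar wp wm v k) := by
    have heq : xiStar wp wm v k = ∑ j ∈ Finset.range (f.natDegree + 1),
        (f.coeff j : ℝ) * ∑' n : ℤ, w (n + j) * xiKernel wp wm k n := by
      refine HasSum.tsum_eq ((hasSum_sum fun j _ =>
        (hshift j).hasSum.mul_left (f.coeff j : ℝ)).congr_fun fun n => ?_)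
      rw [hv, fsR, Finset.sum_mul]
      exact Finset.sum_congr rfl fun j _ => by rw [xiKernel, mul_assoc]
    rw [heq]
    refine hasSum_sum fun j _ => HasSum.mul_left _ ?_
    rw [← (Equiv.addRight (j : ℤ)).hasSum_iff]
    simpa [Function.comp_def] using (hshift j).hasSum
  have hsub := hxi.sub (hasSum_mul_vDelta w k)
  refine hsub.unique ((hasSum_sum_of_ne_finset_zero fun n hn => ?_).congr_fun fun n => ?_)
  · refine Finset.sum_eq_zero fun j hj => ?_
    have := Finset.mem_range.1 hj
    rw [Finset.mem_Ico] at hn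
    rw [if_neg (by omega), mul_zero, mul_zero]
  · rw [← sum_coeff_mul_xiKernel hwp.2.1 hwm.2.1, Finset.mul_sum, ← Finset.sum_sub_distrib]
    refine Finset.sum_congr rfl fun j _ => ?_
    rw [xiKernel_sub k n j (by positivity)]
    ring

lemma bdd_xiStar_sub (hf : f ≠ 0) (hwp : IsWplus f wp) (hwm : IsWminus f wm) {w : ℤ → ℝ}
    (hw : Bdd w) {v : ℤ → ℤ} (hv : ∀ n, (v n : ℝ) = fsR f w n) :
    Bdd fun k => xiStar wp wm v k - w k := by
  obtain ⟨Bp, hBp⟩ := hwp.1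
  obtain ⟨Bm, hBm⟩ := hwm.1
  have hB : 0 ≤ Bp + Bm :=
    add_nonneg ((abs_nonneg _).trans (hBp 0)) ((abs_nonneg _).trans (hBm 0))
  refine ⟨∑ n ∈ Finset.Ico (0 : ℤ) f.natDegree, ∑ j ∈ Finset.range (f.natDegree + 1),
    |(f.coeff j : ℝ)| * (|w n| * (Bp + Bm)), fun k => ?_⟩
  rw [show (fun k => xiStar wp wm v k - w k) k = _ from xiStar_sub_eq hf hwp hwm hw hv k]
  refine (Finset.abs_sum_le_sum_abs _ _).trans (Finset.sum_le_sum fun n _ => ?_)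
  refine (Finset.abs_sum_le_sum_abs _ _).trans (Finset.sum_le_sum fun j _ => ?_)
  rw [abs_mul, abs_mul]
  gcongr
  split_ifs
  · exact (abs_sub _ _).trans (add_le_add (hBp _) (hBm _))
  · simpa using hB

end

/-- `f(σ̄)(ξ̄*(v)) = v` for every `v ∈ ℓ^∞(ℤ,ℤ)`, and
`ξ̄*(f(σ̄)(w)) − w ∈ W_f^∘ = ker f(σ̄)` for every `w ∈ W_f`. -/
theorem xiStar_section (f : Polynomial ℤ) (hm : 1 ≤ f.natDegree)
    (hlead : 0 < f.leadingCoeff) (h0 : f.coeff 0 ≠ 0)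
    (hirr : Irreducible (Polynomial.toLaurent f)) (hnc : Noncyclotomic f)
    (wp wm : ℤ → ℝ) (hwp : IsWplus f wp) (hwm : IsWminus f wm) :
    -- the defining series converges absolutely in each coordinate
    (∀ v : ℤ → ℤ, BddZ v → ∀ k : ℤ,
      Summable fun n : ℤ => |(v n : ℝ) * (if 0 ≤ n then wm (k - n) else wp (k - n))|) ∧
    -- (1) `f(σ̄) ∘ ξ̄* = Id` on `ℓ^∞(ℤ,ℤ)`
    (∀ v : ℤ → ℤ, BddZ v → ∀ n : ℤ, fsR f (xiStar wp wm v) n = (v n : ℝ)) ∧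
    -- (2) `ξ̄*(f(σ̄)(w)) − w ∈ W_f^∘` for every `w ∈ W_f`
    (∀ w : ℤ → ℝ, InWf f w → ∀ v : ℤ → ℤ, (∀ n, (v n : ℝ) = fsR f w n) →
      Bdd (fun k => xiStar wp wm v k - w k) ∧
      ∀ n, fsR f (fun k => xiStar wp wm v k - w k) n = 0) := by
  have hf : f ≠ 0 := leadingCoeff_ne_zero.1 hlead.ne'
  have hcast {v : ℤ → ℤ} (hv : BddZ v) : Bdd fun n => (v n : ℝ) :=
    let ⟨B, hB⟩ := hv
    ⟨B, fun n => by beta_reduce; exact_mod_cast hB n⟩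
  refine ⟨fun v hv k => summable_abs_mul_xiKernel hf hwp hwm (hcast hv) k,
    fun v hv k => fsR_xiStar hf hwp hwm (hcast hv) k,
    fun w hw v hv => ⟨bdd_xiStar_sub hf hwp hwm hw.1 hv, fun n => ?_⟩⟩
  have hvb : Bdd fun n => (v n : ℝ) := by
    rw [funext hv]
    exact bdd_fsR hw.1
  rw [fsR_sub, fsR_xiStar hf hwp hwm hvb, hv, sub_self]

end
end
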